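/- arXiv:2601.21195 — 2 statements merged into one kernel-verified Lean document; each statement's English description precedes it below -/
import Mathlib

section
/- Let n ≥ 1, let q ≥ 1 be a real number, and let x_1,…,x_n be positive reals with x_1+⋯+x_n = 1. Then the q-Tsetlin library operator T_{S_n}(q,x) has a unique stationary distribution Ψ(q,x), and for every permutation π ∈ S_n its component at π equals Ψ(q,x)_π = q^{−inv(π)} · [∏_{k=1, k∈LRM(π)}^{n−1} κ(π_k;x)] · [∏_{k=1, k∉LRM(π)}^{n−1} ( κ(π_{p_k},…,π_k;x) − q^{−1}·κ(π_{p_k},…,π_{k−1};x) )] / ∏_{k=1}^{n−1} ( κ(w_0;x) − q^{k−n−1}·κ(π_1,…,π_{k−1};x) ). -/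
/-!
STATEMENT 0: stationary distribution of the q-Tsetlin library on permutations.
-/

open scoped Classical

noncomputable section

namespace QTsetlin

variable {K : Type} [Field K]

/-- Number of inversions of a permutation (one-line notation `i ↦ π i`). -/
def invCount {n : ℕ} (π : Equiv.Perm (Fin n)) : ℕ :=
  (Finset.univ.filter fun p : Fin n × Fin n => p.1 < p.2 ∧ π p.2 < π p.1).card

/-- Matrix (row convention: row `π` is `π · T_{k+1}`) of the Hecke generator `T_{k+1}`
(paper indexing), which swaps the (0-based) positions `k` and `k+1`. -/
def genMat (n : ℕ) (q : K) (k : ℕ) :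
    Matrix (Equiv.Perm (Fin n)) (Equiv.Perm (Fin n)) K := fun π σ =>
  if h : k + 1 < n then
    if π ⟨k + 1, h⟩ < π ⟨k, Nat.lt_of_succ_lt h⟩ then
      (if σ = π * Equiv.swap ⟨k, Nat.lt_of_succ_lt h⟩ ⟨k + 1, h⟩ then q else 0)
    else
      (if σ = π * Equiv.swap ⟨k, Nat.lt_of_succ_lt h⟩ ⟨k + 1, h⟩ then 1 else 0)
        + (if σ = π then q - 1 else 0)
  else 0

/-- Matrix of the product `T_k T_{k-1} ⋯ T_1` (paper indexing); `prodGen 0 = 1`. -/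
def prodGen (n : ℕ) (q : K) : ℕ → Matrix (Equiv.Perm (Fin n)) (Equiv.Perm (Fin n)) K
  | 0 => 1
  | k + 1 => genMat n q k * prodGen n q k

/-- Matrix of the weighting operator `X_{S_n}(q,x)`: `π ↦ (x_{π_1}/q^{n-π_1}) · π`. -/
def XSn (n : ℕ) (q : K) (x : Fin n → K) :
    Matrix (Equiv.Perm (Fin n)) (Equiv.Perm (Fin n)) K := fun π σ =>
  if σ = π then
    (if h : 0 < n then x (π ⟨0, h⟩) / q ^ (n - 1 - (π ⟨0, h⟩ : ℕ)) else 0)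
  else 0

/-- Matrix of the q-Tsetlin library operator
`T_{S_n}(q,x) = (∑_{i=1}^n T_{i-1} ⋯ T_1) ∘ X_{S_n}(q,x)` on `ℂS_n` (row convention). -/
def TSn (n : ℕ) (q : K) (x : Fin n → K) :
    Matrix (Equiv.Perm (Fin n)) (Equiv.Perm (Fin n)) K :=
  (∑ k ∈ Finset.range n, prodGen n q k) * XSn n q x

/-- `κ(b; x)`: sort the tuple `b` weakly decreasingly, obtaining `(b_1 ≥ ⋯ ≥ b_k)`, and form
`∑_i x_{b_i} q^{i + b_i - k - 1}` (1-based positions and values; here values are 0-based). -/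
def kappa {n : ℕ} (q : K) (x : Fin n → K) (b : List (Fin n)) : K :=
  let s := b.insertionSort (fun a c => c ≤ a)
  ∑ i : Fin s.length, x (s.get i) * q ^ ((i : ℤ) + ((s.get i : ℕ) + 1) - s.length)

/-- `k` is the (0-based) position of a left-to-right minimum of `π`. -/
def isLRM {n : ℕ} (π : Equiv.Perm (Fin n)) (k : Fin n) : Prop :=
  ∀ i : Fin n, i < k → π k < π i

/-- `p_k`: the smallest (0-based) position `i < k` with `π_i < π_k`. -/
def pMin {n : ℕ} (π : Equiv.Perm (Fin n)) (k : Fin n) : ℕ :=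
  sInf {i : ℕ | ∃ h : i < n, (⟨i, h⟩ : Fin n) < k ∧ π ⟨i, h⟩ < π k}

/-- The tuple of values `(π_{p_k}, …, π_k)`. -/
def segTo {n : ℕ} (π : Equiv.Perm (Fin n)) (k : Fin n) : List (Fin n) :=
  ((List.finRange n).filter fun i : Fin n =>
    decide (pMin π k ≤ (i : ℕ) ∧ (i : ℕ) ≤ (k : ℕ))).map π

/-- The tuple of values `(π_{p_k}, …, π_{k-1})`. -/
def segBefore {n : ℕ} (π : Equiv.Perm (Fin n)) (k : Fin n) : List (Fin n) :=
  ((List.finRange n).filter fun i : Fin n =>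
    decide (pMin π k ≤ (i : ℕ) ∧ (i : ℕ) < (k : ℕ))).map π

/-- The tuple of values `(π_1, …, π_{k-1})` when `k` is the (0-based) position `k`
(i.e. the values at positions strictly before `k`). -/
def prefixVals {n : ℕ} (π : Equiv.Perm (Fin n)) (k : Fin n) : List (Fin n) :=
  ((List.finRange n).filter fun i : Fin n => decide (i < k)).map π

/-- The claimed formula for the stationary distribution of the q-Tsetlin library on
permutations.  Note `List.finRange n` is the tuple of all values, whose weakly decreasing
rearrangement is the long permutation `w₀`, so `kappa q x (List.finRange n) = κ(w₀; x)`.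
Products over `k` with `(k : ℕ) + 1 < n` correspond to the paper's `k = 1, …, n-1`. -/
def psiFormula (n : ℕ) (q : K) (x : Fin n → K) (π : Equiv.Perm (Fin n)) : K :=
  q ^ (-(invCount π : ℤ)) *
    ((∏ k ∈ Finset.univ.filter fun k : Fin n => (k : ℕ) + 1 < n ∧ isLRM π k,
        kappa q x [π k]) *
      (∏ k ∈ Finset.univ.filter fun k : Fin n => (k : ℕ) + 1 < n ∧ ¬ isLRM π k,
        (kappa q x (segTo π k) - q⁻¹ * kappa q x (segBefore π k)))) /
    (∏ k ∈ Finset.univ.filter fun k : Fin n => (k : ℕ) + 1 < n,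
      (kappa q x (List.finRange n) - q ^ (((k : ℕ) : ℤ) - (n : ℤ)) * kappa q x (prefixVals π k)))

/-- `Ψ` is a stationary distribution for the Markov chain with (row-convention) transition
matrix `T` and total rate `c`: it is a nonnegative row vector with entries summing to `1`
such that `Ψ · T = c · Ψ`. -/
def IsStationary {P : Type} [Fintype P] (T : Matrix P P ℝ) (c : ℝ) (Ψ : P → ℝ) : Prop :=
  (∀ p, 0 ≤ Ψ p) ∧ (∑ p, Ψ p = 1) ∧ Matrix.vecMul Ψ T = c • Ψ

/-!
The stationary distribution is the law of a random word produced by drawing the letters one at a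
time without replacement. Put `t = q⁻¹`. When the letters in `P` are used, every `b ∈ P` sends its
weight `x b` upwards through the larger unused letters, each of which keeps the fraction `1 - t` of
what reaches it; the next letter is drawn with probability proportional to its own weight plus what
it keeps. Each factor of the product formula is one draw: the numerators are these weights up to
powers of `q`, which the factor `q ^ (-inv π)` cancels, and the denominators are the normalisers,
computed by conservation of weight.

For the law `ψ` of this word, an exchange identity for two consecutive draws makes
`ψ · ∑ i, T_{i-1} ⋯ T_1` collapse to `ψ` with the factor of the first draw replaced by a power of
`q`, and the weighting operator turns this back into `(∑ i, x i) • ψ`. Since the matrix has positive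
entries at all moves of a letter to the front, and these generate the symmetric group, it is
irreducible, so its stationary distribution is unique.
-/

open Finset Equiv

open scoped Matrix

/-! ### Irreducible nonnegative matrices -/

section Irreducible

variable {ι : Type*} [Fintype ι]

lemma vecMul_pow_of_vecMul_eq_smul [DecidableEq ι] {R : Type*} [CommSemiring R]
    {A : Matrix ι ι R} {v : ι → R} {c : R} (hv : v ᵥ* A = c • v) (k : ℕ) :
    v ᵥ* A ^ k = c ^ k • v := by
  induction k with
  | zero => simp
  | succ k ih =>
    rw [pow_succ, ← Matrix.vecMul_vecMul, ih, Matrix.smul_vecMul, hv, smul_smul, ← pow_succ]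

/-- Some power of `A` carries the mass at any `j` to the given zero `i`. -/
lemma eq_zero_of_vecMul_eq_smul {R : Type*} [CommRing R] [LinearOrder R]
    [IsStrictOrderedRing R] {A : Matrix ι ι R} (hA : A.IsIrreducible) {v : ι → R} (hv0 : 0 ≤ v)
    {c : R} (hv : v ᵥ* A = c • v) {i : ι} (hi : v i = 0) : v = 0 := by
  funext j
  obtain ⟨k, -, hk⟩ := (Matrix.isIrreducible_iff_exists_pow_pos hA.nonneg).1 hA j i
  have hsum : ∑ l, v l * (A ^ k) l i = 0 := by
    simpa [Matrix.vecMul, dotProduct, hi] using congrFun (vecMul_pow_of_vecMul_eq_smul hv k) i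
  have hterm := (sum_eq_zero_iff_of_nonneg fun l _ =>
    mul_nonneg (hv0 l) (Matrix.pow_apply_nonneg hA.nonneg k l i)).1 hsum j (mem_univ j)
  exact (mul_eq_zero.1 hterm).resolve_right hk.ne'

lemma isIrreducible_of_closure_eq_top {G : Type*} [Group G] [Finite G] {R : Type*} [Ring R]
    [LinearOrder R] [IsStrictOrderedRing R] {A : Matrix G G R} (hA : ∀ g h, 0 ≤ A g h)
    {S : Set G} (hS : S.Nonempty) (hclosure : Subgroup.closure S = ⊤)
    (hpos : ∀ g, ∀ s ∈ S, 0 < A g (g * s)) : A.IsIrreducible := by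
  have := Fintype.ofFinite G
  have hstep : ∀ {k : ℕ} {g h : G} {s : G}, 0 < (A ^ k) g h → s ∈ S →
      0 < (A ^ (k + 1)) g (h * s) := by
    intro k g h s hk hs
    rw [pow_succ, Matrix.mul_apply]
    exact sum_pos' (fun l _ => mul_nonneg (Matrix.pow_apply_nonneg hA k g l) (hA l _))
      ⟨h, mem_univ h, mul_pos hk (hpos h s hs)⟩
  have hreach : ∀ g h : G, ∃ k, 0 < (A ^ k) g (g * h) := by
    intro g h
    have hh : h ∈ Submonoid.closure S := by
      rw [← Subgroup.closure_toSubmonoid_of_finite, hclosure]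
      exact Subgroup.mem_top h
    induction hh using Submonoid.closure_induction_right with
    | one => exact ⟨0, by simp⟩
    | mul_right h _ s hs ih =>
      obtain ⟨k, hk⟩ := ih
      exact ⟨k + 1, mul_assoc g h s ▸ hstep hk hs⟩
  obtain ⟨s, hs⟩ := hS
  refine (Matrix.isIrreducible_iff_exists_pow_pos hA).2 fun g h => ?_
  obtain ⟨k, hk⟩ := hreach g (g⁻¹ * (h * s⁻¹))
  exact ⟨k + 1, k.succ_pos, by simpa using hstep hk hs⟩

end Irreducible

namespace IsStationary

variable {P : Type} [Fintype P] {A : Matrix P P ℝ} {c : ℝ} {Φ Ψ : P → ℝ}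

lemma pos (hA : A.IsIrreducible) (hΦ : IsStationary A c Φ) (p : P) :
    0 < Φ p := by
  refine (hΦ.1 p).lt_of_ne' fun hp => ?_
  have hzero := eq_zero_of_vecMul_eq_smul hA hΦ.1 hΦ.2.2 hp
  simpa [hzero] using hΦ.2.1

lemma eq_of_isIrreducible (hA : A.IsIrreducible) (hΨ : IsStationary A c Ψ)
    (hΦ : IsStationary A c Φ) : Ψ = Φ := by
  obtain ⟨p₀, -⟩ := exists_ne_zero_of_sum_ne_zero (hΨ.2.1 ▸ one_ne_zero : ∑ p, Ψ p ≠ 0)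
  obtain ⟨p, -, hp⟩ := univ.exists_min_image (fun p => Ψ p / Φ p) ⟨p₀, mem_univ p₀⟩
  set r := Ψ p / Φ p with hr
  have hnonneg : 0 ≤ Ψ - r • Φ := fun p' =>
    sub_nonneg.2 ((le_div_iff₀ (hΦ.pos hA p')).1 (hp p' (mem_univ p')))
  have hstat : (Ψ - r • Φ) ᵥ* A = c • (Ψ - r • Φ) := by
    rw [Matrix.sub_vecMul, Matrix.smul_vecMul, hΨ.2.2, hΦ.2.2, smul_sub, smul_comm]
  have hzero : (Ψ - r • Φ) p = 0 := by simp [hr, (hΦ.pos hA p).ne']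
  have hΨΦ : Ψ = r • Φ := sub_eq_zero.1 (eq_zero_of_vecMul_eq_smul hA hnonneg hstat hzero)
  have hr1 : r = 1 := by simpa [hΨΦ, ← mul_sum, hΦ.2.1] using hΨ.2.1
  rw [hΨΦ, hr1, one_smul]

end IsStationary

/-! ### Weights carried past unused letters -/

section Weights

variable {α R : Type*} [LinearOrder α]

/-- The number of unused letters that weight released at `b` still has to pass, when the letters
in `P` are used. -/
def unusedAbove [Fintype α] (P : Finset α) (b : α) : ℕ := #{c ∈ Pᶜ | b < c}

/-- The total weight arriving at the top of the initial segment `U`, when every letter `b` of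
`P ∩ U` releases its weight `x b` upwards and each unused letter passed lets through the
fraction `t`. -/
def passingWeight [CommRing R] (t : R) (x : α → R) (P U : Finset α) : R :=
  ∑ b ∈ U ∩ P, x b * t ^ #{c ∈ U \ P | b < c}

/-- The weight accumulated by the letter `a` when the letters in `P` are used: its own weight and
the fraction `1 - t` of the weight that arrives from the used letters below `a`. -/
def pickWeight [CommRing R] [LocallyFiniteOrderBot α] (t : R) (x : α → R) (P : Finset α)
    (a : α) : R :=
  x a + (1 - t) * passingWeight t x P (Iio a)

/-- The normaliser of `pickWeight` over the unused letters. -/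
def totalPickWeight [CommRing R] [LocallyFiniteOrderBot α] [Fintype α] (t : R) (x : α → R)
    (P : Finset α) : R :=
  ∑ a ∈ Pᶜ, pickWeight t x P a

lemma unusedAbove_insert_of_le [Fintype α] {P : Finset α} {b h : α} (hb : h ≤ b) :
    unusedAbove (insert h P) b = unusedAbove P b := by
  unfold unusedAbove
  congr 1
  grind [mem_compl]

lemma mul_sum_pow_card_filter_lt [CommRing R] (t : R) (S : Finset α) :
    (1 - t) * ∑ a ∈ S, t ^ #{c ∈ S | c < a} = 1 - t ^ #S := by
  induction S using Finset.induction_on_max with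
  | empty => simp
  | insert a s hs ih =>
    have ha : a ∉ s := fun h => lt_irrefl _ (hs a h)
    have htop : {c ∈ insert a s | c < a} = s := by grind
    have hlow : ∀ b ∈ s, {c ∈ insert a s | c < b} = {c ∈ s | c < b} := by grind
    rw [sum_insert ha, card_insert_of_notMem ha, mul_add, htop,
      sum_congr rfl fun b hb => by rw [hlow b hb], ih]
    ring

section CommRing

variable [CommRing R] (t : R) (x : α → R)

lemma passingWeight_insert_of_notMem {P U : Finset α} {h : α} (hU : h ∉ U) :
    passingWeight t x (insert h P) U = passingWeight t x P U := by
  rw [passingWeight, passingWeight, inter_insert_of_notMem hU, sdiff_insert_of_notMem hU]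

variable [LocallyFiniteOrderBot α]

lemma card_sdiff_filter_lt_eq {P U : Finset α} {b h : α} (hh : h ∉ P) (hhU : h ∈ U)
    (hU : ∀ c < h, c ∈ U) (hb : b < h) :
    #{c ∈ U \ P | b < c} = #{c ∈ Iio h \ P | b < c} + #{c ∈ U \ P | h < c} + 1 := by
  have hsplit : {c ∈ U \ P | b < c} =
      insert h ({c ∈ Iio h \ P | b < c} ∪ {c ∈ U \ P | h < c}) := by grind
  rw [hsplit, card_insert_of_notMem (by grind), card_union_of_disjoint]
  exact disjoint_left.2 (by grind)

/-- Once `h` is used, the weight it used to keep travels on, together with its own. -/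
lemma passingWeight_insert {P U : Finset α} {h : α} (hh : h ∉ P) (hhU : h ∈ U)
    (hU : ∀ c < h, c ∈ U) :
    passingWeight t x (insert h P) U =
      passingWeight t x P U + t ^ #{c ∈ U \ P | h < c} * pickWeight t x P h := by
  have hbelow : ∑ b ∈ U ∩ P, x b * t ^ #{c ∈ U \ insert h P | b < c} = passingWeight t x P U +
      t ^ #{c ∈ U \ P | h < c} * ((1 - t) * passingWeight t x P (Iio h)) := by
    have hlow : Iio h ∩ P = {b ∈ U ∩ P | b < h} := by grind
    rw [passingWeight, passingWeight, hlow, sum_filter, mul_sum, mul_sum, ← sum_add_distrib]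
    refine sum_congr rfl fun b _ => ?_
    split_ifs with hbh
    · have herase : {c ∈ U \ insert h P | b < c} = {c ∈ U \ P | b < c}.erase h := by grind
      rw [herase, card_erase_of_mem (by grind), card_sdiff_filter_lt_eq hh hhU hU hbh,
        Nat.add_sub_cancel]
      ring
    · have hsame : {c ∈ U \ insert h P | b < c} = {c ∈ U \ P | b < c} := by grind
      rw [hsame]
      ring
  have hown : {c ∈ U \ insert h P | h < c} = {c ∈ U \ P | h < c} := by grind
  rw [passingWeight, inter_insert_of_mem hhU, sum_insert (by grind), hbelow, hown, pickWeight]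
  ring

lemma pickWeight_insert_of_lt {P : Finset α} {h a : α} (hh : h ∉ P) (hha : h < a) :
    pickWeight t x (insert h P) a =
      pickWeight t x P a + (1 - t) * t ^ #{c ∈ Iio a \ P | h < c} * pickWeight t x P h := by
  have hpass := passingWeight_insert t x hh (mem_Iio.2 hha) fun c hc => mem_Iio.2 (hc.trans hha)
  unfold pickWeight at hpass ⊢
  rw [hpass]
  ring

lemma pickWeight_insert_of_gt {P : Finset α} {h a : α} (hah : a < h) :
    pickWeight t x (insert h P) a = pickWeight t x P a := by
  rw [pickWeight, passingWeight_insert_of_notMem t x (by simpa using hah.le), pickWeight]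

variable [Fintype α]

/-- Weight is conserved: what the unused letters do not keep leaves at the top. -/
lemma totalPickWeight_eq (P : Finset α) :
    totalPickWeight t x P = ∑ a, x a - passingWeight t x P univ := by
  have hkept : (1 - t) * ∑ a ∈ Pᶜ, passingWeight t x P (Iio a) =
      ∑ b ∈ P, x b * (1 - t ^ unusedAbove P b) := by
    have hswap : ∑ a ∈ Pᶜ, passingWeight t x P (Iio a) =
        ∑ b ∈ P, ∑ a ∈ Pᶜ with b < a, x b * t ^ #{c ∈ Iio a \ P | b < c} :=
      sum_comm' (by grind [mem_compl])
    rw [hswap, mul_sum]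
    refine sum_congr rfl fun b _ => ?_
    have hcard : ∀ a ∈ ({a ∈ Pᶜ | b < a} : Finset α),
        {c ∈ Iio a \ P | b < c} = {c ∈ {c ∈ Pᶜ | b < c} | c < a} := by grind [mem_compl]
    rw [unusedAbove, ← mul_sum_pow_card_filter_lt, ← mul_sum, mul_left_comm,
      sum_congr rfl fun a ha => by rw [hcard a ha]]
  have htop : passingWeight t x P univ = ∑ b ∈ P, x b * t ^ unusedAbove P b := by
    rw [passingWeight, univ_inter, ← compl_eq_univ_sdiff]
    rfl
  have hx : ∑ a ∈ Pᶜ, x a + ∑ b ∈ P, x b = ∑ a, x a := sum_compl_add_sum P x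
  rw [totalPickWeight, htop, ← hx]
  simp only [pickWeight, sum_add_distrib, ← mul_sum, hkept, mul_sub, mul_one, sum_sub_distrib]
  ring

lemma totalPickWeight_insert {P : Finset α} {h : α} (hh : h ∉ P) :
    totalPickWeight t x (insert h P) =
      totalPickWeight t x P - t ^ unusedAbove P h * pickWeight t x P h := by
  rw [totalPickWeight_eq, totalPickWeight_eq, passingWeight_insert t x hh (mem_univ h) (by simp),
    ← compl_eq_univ_sdiff, unusedAbove, sub_sub]

lemma unusedAbove_eq_add {P : Finset α} {b h : α} (hh : h ∉ P) (hb : b < h) :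
    unusedAbove P b = #{c ∈ Iio h \ P | b < c} + unusedAbove P h + 1 := by
  simpa only [unusedAbove, compl_eq_univ_sdiff] using
    card_sdiff_filter_lt_eq hh (mem_univ h) (by simp) hb

lemma unusedAbove_insert_of_lt {P : Finset α} {b h : α} (hh : h ∉ P) (hb : b < h) :
    unusedAbove (insert h P) b = #{c ∈ Iio h \ P | b < c} + unusedAbove P h := by
  have herase : {c ∈ (insert h P)ᶜ | b < c} = {c ∈ Pᶜ | b < c}.erase h := by grind [mem_compl]
  rw [unusedAbove, herase, card_erase_of_mem (by grind [mem_compl]), ← unusedAbove,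
    unusedAbove_eq_add hh hb, Nat.add_sub_cancel]

end CommRing

section Ordered

variable [CommRing R] [LinearOrder R] [IsStrictOrderedRing R] [LocallyFiniteOrderBot α]
  {t : R} {x : α → R}

lemma pickWeight_pos (ht0 : 0 ≤ t) (ht1 : t ≤ 1) (hx : ∀ a, 0 < x a) (P : Finset α) (a : α) :
    0 < pickWeight t x P a :=
  add_pos_of_pos_of_nonneg (hx a) <| mul_nonneg (sub_nonneg.2 ht1) <|
    sum_nonneg fun b _ => mul_nonneg (hx b).le (pow_nonneg ht0 _)

lemma totalPickWeight_pos [Fintype α] (ht0 : 0 ≤ t) (ht1 : t ≤ 1) (hx : ∀ a, 0 < x a)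
    {P : Finset α} (hP : P ≠ univ) : 0 < totalPickWeight t x P :=
  sum_pos (fun a _ => pickWeight_pos ht0 ht1 hx P a)
    (nonempty_iff_ne_empty.2 fun h => hP (compl_eq_empty_iff P |>.1 h))

end Ordered

section Field

variable {F : Type*} [Field F] [LocallyFiniteOrderBot α] [Fintype α]

/-- The probability that the letter `a` is the next one, when the letters in `P` are used. -/
def pickProb (t : F) (x : α → F) (P : Finset α) (a : α) : F :=
  pickWeight t x P a / totalPickWeight t x P

lemma sum_pickProb {t : F} {x : α → F} {P : Finset α} (hP : totalPickWeight t x P ≠ 0) :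
    ∑ a ∈ Pᶜ, pickProb t x P a = 1 := by
  simp only [pickProb, ← sum_div]
  exact div_self hP

variable {q : F} {x : α → F} {P : Finset α} {a b : α}

/-- Picking `a` first costs the fraction `pickProb P a / q ^ unusedAbove P a` of the total weight,
which cancels the change of normaliser. -/
lemma sub_pickProb_mul_pickProb_insert (hq : q ≠ 0) (ha : a ∉ P)
    (hD : totalPickWeight q⁻¹ x P ≠ 0) (hD' : totalPickWeight q⁻¹ x (insert a P) ≠ 0) :
    (q ^ unusedAbove P a - pickProb q⁻¹ x P a) * pickProb q⁻¹ x (insert a P) b =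
      q ^ unusedAbove P a * (pickWeight q⁻¹ x (insert a P) b / totalPickWeight q⁻¹ x P) := by
  have hpick : q ^ unusedAbove P a - pickProb q⁻¹ x P a =
      q ^ unusedAbove P a * (totalPickWeight q⁻¹ x (insert a P) / totalPickWeight q⁻¹ x P) := by
    rw [totalPickWeight_insert q⁻¹ x ha, sub_div, div_self hD, mul_sub, mul_one, mul_div_assoc,
      inv_pow, mul_inv_cancel_left₀ (pow_ne_zero _ hq), pickProb]
  rw [hpick, pickProb, mul_assoc, mul_comm (_ / _), div_mul_div_cancel₀ hD']

lemma pickProb_exchange_of_gt (hq : q ≠ 0) (ha : a ∉ P) (hba : b < a)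
    (hD : totalPickWeight q⁻¹ x P ≠ 0) (hD' : totalPickWeight q⁻¹ x (insert a P) ≠ 0) :
    q ^ unusedAbove P a * pickProb q⁻¹ x (insert a P) b =
      pickProb q⁻¹ x P a * pickProb q⁻¹ x (insert a P) b +
        q ^ unusedAbove (insert b P) a * pickProb q⁻¹ x P b := by
  rw [← sub_eq_iff_eq_add', ← sub_mul, sub_pickProb_mul_pickProb_insert hq ha hD hD',
    pickWeight_insert_of_gt q⁻¹ x hba, unusedAbove_insert_of_le hba.le, pickProb]

lemma pickProb_exchange_of_lt (hq : q ≠ 0) (ha : a ∉ P) (hb : b ∉ P) (hab : a < b)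
    (hD : totalPickWeight q⁻¹ x P ≠ 0) (hD' : totalPickWeight q⁻¹ x (insert a P) ≠ 0) :
    q ^ unusedAbove P a * pickProb q⁻¹ x (insert a P) b =
      pickProb q⁻¹ x P a * pickProb q⁻¹ x (insert a P) b +
        (q * (q ^ unusedAbove (insert b P) a * pickProb q⁻¹ x P b) +
          (q - 1) * (q ^ unusedAbove (insert a P) b * pickProb q⁻¹ x P a)) := by
  rw [← sub_eq_iff_eq_add', ← sub_mul, sub_pickProb_mul_pickProb_insert hq ha hD hD',
    pickWeight_insert_of_lt q⁻¹ x ha hab, unusedAbove_insert_of_lt hb hab,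
    unusedAbove_insert_of_le hab.le, unusedAbove_eq_add hb hab, pickProb, pickProb, inv_pow]
  field_simp
  ring

lemma totalPickWeight_inv_ne_zero [LinearOrder F] [IsStrictOrderedRing F] (hq : 1 ≤ q)
    (hx : ∀ a, 0 < x a) : ∀ P ≠ univ, totalPickWeight q⁻¹ x P ≠ 0 := fun _ hP =>
  (totalPickWeight_pos (inv_nonneg.2 (zero_le_one.trans hq)) (inv_le_one_of_one_le₀ hq) hx hP).ne'

end Field

end Weights

/-! ### Sampling without replacement -/

section Sampling

variable {n : ℕ}

/-- The letters in the positions of `σ` before `k`. -/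
def prefixSet (σ : Perm (Fin n)) (k : Fin n) : Finset (Fin n) := (Iio k).map σ.toEmbedding

lemma mem_prefixSet {σ : Perm (Fin n)} {k c : Fin n} : c ∈ prefixSet σ k ↔ σ.symm c < k := by
  simp [prefixSet]

lemma apply_mem_prefixSet {σ : Perm (Fin n)} {j k : Fin n} : σ j ∈ prefixSet σ k ↔ j < k := by
  rw [mem_prefixSet, symm_apply_apply]

lemma apply_notMem_prefixSet (σ : Perm (Fin n)) (k : Fin n) : σ k ∉ prefixSet σ k := by
  simp [apply_mem_prefixSet]

lemma prefixSet_ne_univ (σ : Perm (Fin n)) (k : Fin n) : prefixSet σ k ≠ univ :=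
  fun h => apply_notMem_prefixSet σ k (h ▸ mem_univ _)

lemma card_prefixSet (σ : Perm (Fin n)) (k : Fin n) : #(prefixSet σ k) = k := by
  simp [prefixSet]

lemma prefixSet_zero (σ : Perm (Fin (n + 1))) : prefixSet σ 0 = ∅ := by
  ext c
  simp [mem_prefixSet]

lemma compl_prefixSet_last (σ : Perm (Fin (n + 1))) :
    (prefixSet σ (Fin.last n))ᶜ = {σ (Fin.last n)} := by
  ext c
  simp [mem_prefixSet, Fin.last_le_iff, Equiv.symm_apply_eq]

lemma prefixSet_succ (σ : Perm (Fin (n + 1))) (i : Fin n) :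
    prefixSet σ i.succ = insert (σ i.castSucc) (prefixSet σ i.castSucc) := by
  ext c
  rw [mem_insert, mem_prefixSet, mem_prefixSet, ← Equiv.symm_apply_eq, ← le_iff_eq_or_lt,
    ← Fin.le_castSucc_iff]

lemma prefixSet_mul_swap (σ : Perm (Fin (n + 1))) {i : Fin n} {k : Fin (n + 1)}
    (hk : k ≠ i.succ) :
    prefixSet (σ * swap i.castSucc i.succ) k = prefixSet σ k := by
  ext c
  have hsymm : (σ * swap i.castSucc i.succ).symm c = swap i.castSucc i.succ (σ.symm c) := by
    simp [Equiv.symm_apply_eq]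
  rw [mem_prefixSet, mem_prefixSet, hsymm, swap_apply_def]
  grind

lemma pickProb_prefixSet_last {t : K} {x : Fin (n + 1) → K} {σ : Perm (Fin (n + 1))}
    (hD : totalPickWeight t x (prefixSet σ (Fin.last n)) ≠ 0) :
    pickProb t x (prefixSet σ (Fin.last n)) (σ (Fin.last n)) = 1 := by
  rw [← sum_pickProb hD, compl_prefixSet_last, sum_singleton]

/-- The probability that successive picks produce the letters of `σ` from left to right. -/
def orderProb (t : K) (x : Fin n → K) (σ : Perm (Fin n)) : K :=
  ∏ k, pickProb t x (prefixSet σ k) (σ k)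

lemma sum_prod_embedding_eq_one {α R : Type*} [Fintype α] [DecidableEq α] [CommRing R]
    {f : Finset α → α → R} (hf : ∀ P ≠ univ, ∑ a ∈ Pᶜ, f P a = 1) {k : ℕ}
    (hk : k ≤ Fintype.card α) :
    ∑ e : Fin k ↪ α, ∏ i, f ((Ioi i).map e) (e i) = 1 := by
  induction k with
  | zero => simp
  | succ k ih =>
    have hchoose : ∀ e : Fin k ↪ α, ∑ a : {a // a ∉ Set.range e}, f (univ.map e) a = 1 := by
      intro e
      have hne : univ.map e ≠ univ := fun h => by
        have hcard := congrArg card h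
        simp only [card_map, card_univ, Fintype.card_fin] at hcard
        omega
      rw [← hf _ hne]
      exact (sum_subtype _ (by simp) _).symm
    have hcons : ∀ (e : Fin k ↪ α) (a : {a // a ∉ Set.range e}),
        ∏ i, f ((Ioi i).map ((embeddingFinSucc k α).symm ⟨e, a⟩))
          ((embeddingFinSucc k α).symm ⟨e, a⟩ i) =
        f (univ.map e) a * ∏ i, f ((Ioi i).map e) (e i) := by
      intro e a
      have hmap : ∀ S : Finset (Fin k),
          (S.map (Fin.succEmb k)).map ((embeddingFinSucc k α).symm ⟨e, a⟩) = S.map e := by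
        intro S
        ext
        simp
      rw [Fin.prod_univ_succ]
      simp only [← Fin.map_succEmb_Ioi, Fin.Ioi_zero_eq_map, hmap]
      simp
    rw [← (embeddingFinSucc k α).symm.sum_comp, Fintype.sum_sigma]
    simp only [hcons, ← sum_mul, hchoose, one_mul]
    exact ih (Nat.le_of_succ_le hk)

lemma sum_orderProb {t : K} {x : Fin n → K} (hD : ∀ P ≠ univ, totalPickWeight t x P ≠ 0) :
    ∑ σ, orderProb t x σ = 1 := by
  rw [← sum_prod_embedding_eq_one (f := pickProb t x) (fun P hP => sum_pickProb (hD P hP))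
    (Fintype.card_fin n).ge]
  let e : Perm (Fin n) ≃ (Fin n ↪ Fin n) :=
    (Equiv.mulRight Fin.revPerm).trans (embeddingEquivOfFinite (Fin n)).symm
  refine Fintype.sum_equiv e _ _ fun σ => Fintype.prod_equiv Fin.revPerm _ _ fun k => ?_
  have happly : e σ (Fin.revPerm k) = σ k := congrArg σ (Fin.rev_rev k)
  have hmap : (Ioi (Fin.revPerm k)).map (e σ) = prefixSet σ k := by
    have he : e σ = Fin.revPerm.toEmbedding.trans σ.toEmbedding := rfl
    rw [he, ← map_map, Fin.map_revPerm_Ioi, Fin.revPerm_apply, Fin.rev_rev, prefixSet]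
  rw [happly, hmap]

end Sampling

/-! ### Stationarity -/

section Stationarity

variable {n : ℕ} {q : K} {x : Fin (n + 1) → K}

/-- The coefficient of `σ` in `orderProb q⁻¹ x · (1 + T_{j+1} + T_{j+2} T_{j+1} + ⋯)`, where the
Hecke generators are numbered as in the paper and the positions `j` from `0`. -/
def insertWeight (q : K) (x : Fin n → K) (j : Fin n) (σ : Perm (Fin n)) : K :=
  q ^ unusedAbove (prefixSet σ j) (σ j) *
    ∏ k ∈ univ.erase j, pickProb q⁻¹ x (prefixSet σ k) (σ k)

lemma genMat_apply (q : K) (i : Fin n) (π σ : Perm (Fin (n + 1))) :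
    genMat (n + 1) q i π σ =
      (if π = σ * swap i.castSucc i.succ then if σ i.castSucc < σ i.succ then q else 1 else 0) +
        if π = σ then if σ i.castSucc < σ i.succ then q - 1 else 0 else 0 := by
  set s := swap i.castSucc i.succ with hs
  have hlt : (i : ℕ) + 1 < n + 1 := Nat.succ_lt_succ i.isLt
  have hpos : i.castSucc ≠ i.succ := i.castSucc_lt_succ.ne
  have hval : σ i.castSucc ≠ σ i.succ := σ.injective.ne hpos
  have hiff : σ = π * s ↔ π = σ * s :=
    ⟨fun h => by rw [h, mul_assoc, hs, swap_mul_self, mul_one],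
      fun h => by rw [h, mul_assoc, hs, swap_mul_self, mul_one]⟩
  change (if _ : (i : ℕ) + 1 < n + 1 then if π i.succ < π i.castSucc then
      if σ = π * s then q else 0 else (if σ = π * s then 1 else 0) + if σ = π then q - 1 else 0
    else 0) = _
  simp only [dif_pos hlt, hiff, eq_comm (a := σ)]
  by_cases hπ : π = σ * s
  · subst hπ
    simp [hs, hpos]
  · by_cases hπσ : π = σ
    · subst hπσ
      rcases hval.lt_or_gt with h | h <;> simp [hπ, h, h.not_gt]
    · simp [hπ, hπσ]

lemma vecMul_genMat_apply (q : K) (v : Perm (Fin (n + 1)) → K) (i : Fin n)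
    (σ : Perm (Fin (n + 1))) :
    (v ᵥ* genMat (n + 1) q i) σ =
      if σ i.castSucc < σ i.succ then q * v (σ * swap i.castSucc i.succ) + (q - 1) * v σ
      else v (σ * swap i.castSucc i.succ) := by
  simp only [Matrix.vecMul, dotProduct, genMat_apply, mul_add, sum_add_distrib, mul_ite, mul_zero,
    sum_ite_eq', mem_univ, if_true]
  split_ifs <;> ring

lemma insertWeight_succ_apply (q : K) (x : Fin (n + 1) → K) (i : Fin n) (σ : Perm (Fin (n + 1))) :
    insertWeight q x i.succ σ =
      q ^ unusedAbove (insert (σ i.castSucc) (prefixSet σ i.castSucc)) (σ i.succ) *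
        (pickProb q⁻¹ x (prefixSet σ i.castSucc) (σ i.castSucc) *
          ∏ k ∈ (univ.erase i.castSucc).erase i.succ, pickProb q⁻¹ x (prefixSet σ k) (σ k)) := by
  have hmem : i.castSucc ∈ univ.erase i.succ := by simp [i.castSucc_lt_succ.ne]
  rw [insertWeight, ← mul_prod_erase _ _ hmem, erase_right_comm, prefixSet_succ]

lemma insertWeight_castSucc_apply (q : K) (x : Fin (n + 1) → K) (i : Fin n)
    (σ : Perm (Fin (n + 1))) :
    insertWeight q x i.castSucc σ =
      q ^ unusedAbove (prefixSet σ i.castSucc) (σ i.castSucc) *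
        (pickProb q⁻¹ x (insert (σ i.castSucc) (prefixSet σ i.castSucc)) (σ i.succ) *
          ∏ k ∈ (univ.erase i.castSucc).erase i.succ, pickProb q⁻¹ x (prefixSet σ k) (σ k)) := by
  have hmem : i.succ ∈ univ.erase i.castSucc := by simp [i.castSucc_lt_succ.ne']
  rw [insertWeight, ← mul_prod_erase _ _ hmem, prefixSet_succ]

lemma orderProb_eq_mul_mul_prod (t : K) (x : Fin (n + 1) → K) (i : Fin n)
    (σ : Perm (Fin (n + 1))) :
    orderProb t x σ =
      pickProb t x (prefixSet σ i.castSucc) (σ i.castSucc) *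
        (pickProb t x (insert (σ i.castSucc) (prefixSet σ i.castSucc)) (σ i.succ) *
          ∏ k ∈ (univ.erase i.castSucc).erase i.succ, pickProb t x (prefixSet σ k) (σ k)) := by
  have hmem : i.succ ∈ univ.erase i.castSucc := by simp [i.castSucc_lt_succ.ne']
  rw [orderProb, ← mul_prod_erase univ _ (mem_univ i.castSucc), ← mul_prod_erase _ _ hmem,
    prefixSet_succ]

lemma prod_pickProb_mul_swap (t : K) (x : Fin (n + 1) → K) (i : Fin n) (σ : Perm (Fin (n + 1))) :
    ∏ k ∈ (univ.erase i.castSucc).erase i.succ,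
        pickProb t x (prefixSet (σ * swap i.castSucc i.succ) k)
          ((σ * swap i.castSucc i.succ) k) =
      ∏ k ∈ (univ.erase i.castSucc).erase i.succ, pickProb t x (prefixSet σ k) (σ k) := by
  refine prod_congr rfl fun k hk => ?_
  obtain ⟨hk₁, hk₀⟩ : k ≠ i.succ ∧ k ≠ i.castSucc := by simpa using hk
  rw [prefixSet_mul_swap σ hk₁, Perm.mul_apply, swap_apply_of_ne_of_ne hk₀ hk₁]

lemma insertWeight_castSucc (hq : q ≠ 0) (hD : ∀ P ≠ univ, totalPickWeight q⁻¹ x P ≠ 0)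
    (i : Fin n) :
    insertWeight q x i.castSucc =
      orderProb q⁻¹ x + insertWeight q x i.succ ᵥ* genMat (n + 1) q i := by
  funext σ
  have hD₀ := hD _ (prefixSet_ne_univ σ i.castSucc)
  have hD₁ := hD _ (prefixSet_ne_univ σ i.succ)
  rw [prefixSet_succ] at hD₁
  have ha : σ i.castSucc ∉ prefixSet σ i.castSucc := apply_notMem_prefixSet σ _
  have hb : σ i.succ ∉ prefixSet σ i.castSucc := by
    simpa [apply_mem_prefixSet] using i.castSucc_lt_succ.le
  have hne : σ i.castSucc ≠ σ i.succ := σ.injective.ne i.castSucc_lt_succ.ne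
  rw [Pi.add_apply, vecMul_genMat_apply, insertWeight_castSucc_apply, insertWeight_succ_apply,
    insertWeight_succ_apply, orderProb_eq_mul_mul_prod _ _ i, prod_pickProb_mul_swap,
    prefixSet_mul_swap σ i.castSucc_lt_succ.ne, Perm.mul_apply, Perm.mul_apply, swap_apply_left,
    swap_apply_right]
  set rest := ∏ k ∈ (univ.erase i.castSucc).erase i.succ, pickProb q⁻¹ x (prefixSet σ k) (σ k)
  split_ifs with hlt
  · linear_combination rest * pickProb_exchange_of_lt hq ha hb hlt hD₀ hD₁
  · linear_combination
      rest * pickProb_exchange_of_gt hq ha (lt_of_le_of_ne (not_lt.1 hlt) hne.symm) hD₀ hD₁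

lemma insertWeight_last (hD : ∀ P ≠ univ, totalPickWeight q⁻¹ x P ≠ 0) :
    insertWeight q x (Fin.last n) = orderProb q⁻¹ x := by
  funext σ
  have habove : unusedAbove (prefixSet σ (Fin.last n)) (σ (Fin.last n)) = 0 := by
    simp [unusedAbove, compl_prefixSet_last, filter_singleton]
  rw [insertWeight, orderProb, ← mul_prod_erase univ _ (mem_univ (Fin.last n)), habove,
    pickProb_prefixSet_last (hD _ (prefixSet_ne_univ _ _)), pow_zero]

lemma insertWeight_zero_eq (hq : q ≠ 0) (hD : ∀ P ≠ univ, totalPickWeight q⁻¹ x P ≠ 0)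
    (j : Fin (n + 1)) :
    insertWeight q x 0 = orderProb q⁻¹ x ᵥ* (∑ k ∈ range j, prodGen (n + 1) q k) +
      insertWeight q x j ᵥ* prodGen (n + 1) q j := by
  induction j using Fin.induction with
  | zero => simp [prodGen]
  | succ i ih =>
    rw [ih, insertWeight_castSucc hq hD, Fin.val_castSucc, Fin.val_succ, sum_range_succ, prodGen,
      Matrix.vecMul_add, Matrix.add_vecMul, Matrix.vecMul_vecMul, add_assoc]

lemma vecMul_XSn_apply (q : K) (x : Fin (n + 1) → K) (v : Perm (Fin (n + 1)) → K)
    (σ : Perm (Fin (n + 1))) :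
    (v ᵥ* XSn (n + 1) q x) σ = v σ * (x (σ 0) / q ^ (n - σ 0 : ℕ)) := by
  simp [Matrix.vecMul, dotProduct, XSn]

theorem orderProb_vecMul_TSn (hq : q ≠ 0) (hD : ∀ P ≠ univ, totalPickWeight q⁻¹ x P ≠ 0) :
    orderProb q⁻¹ x ᵥ* TSn (n + 1) q x = (∑ i, x i) • orderProb q⁻¹ x := by
  have hsum : orderProb q⁻¹ x ᵥ* (∑ k ∈ range (n + 1), prodGen (n + 1) q k) =
      insertWeight q x 0 := by
    rw [insertWeight_zero_eq hq hD (Fin.last n), insertWeight_last hD, Fin.val_last,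
      sum_range_succ, Matrix.vecMul_add]
  have htotal : totalPickWeight q⁻¹ x ∅ = ∑ i, x i := by simp [totalPickWeight_eq, passingWeight]
  have hx := hD ∅ univ_nonempty.ne_empty.symm
  funext σ
  have hfirst : pickProb q⁻¹ x ∅ (σ 0) = x (σ 0) / ∑ i, x i := by
    simp [pickProb, pickWeight, passingWeight, htotal]
  have habove : unusedAbove ∅ (σ 0) = n - σ 0 := by
    simp [unusedAbove, filter_lt_eq_Ioi]
  rw [TSn, ← Matrix.vecMul_vecMul, hsum, vecMul_XSn_apply, Pi.smul_apply, smul_eq_mul, orderProb,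
    ← mul_prod_erase univ _ (mem_univ 0), insertWeight, prefixSet_zero, hfirst, habove]
  rw [htotal] at hx
  field_simp

end Stationarity

/-! ### Irreducibility -/

section IrreducibleTSn

variable {n : ℕ}

/-- Right multiplication by `moveToFront k` moves the letter in position `k` to the front. -/
def moveToFront : Fin (n + 1) → Perm (Fin (n + 1)) :=
  Fin.induction 1 fun i τ => swap i.castSucc i.succ * τ

lemma moveToFront_succ (i : Fin n) :
    moveToFront i.succ = swap i.castSucc i.succ * moveToFront i.castSucc := rfl

lemma closure_range_moveToFront :
    Subgroup.closure (Set.range (moveToFront : Fin (n + 1) → Perm (Fin (n + 1)))) = ⊤ := by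
  have hmem : ∀ k, moveToFront k ∈
      Subgroup.closure (Set.range (moveToFront : Fin (n + 1) → Perm (Fin (n + 1)))) :=
    fun k => Subgroup.subset_closure ⟨k, rfl⟩
  have hswap : Set.range (fun i : Fin n => swap i.castSucc i.succ) ⊆
      Subgroup.closure (Set.range (moveToFront : Fin (n + 1) → Perm (Fin (n + 1)))) := by
    rintro _ ⟨i, rfl⟩
    simpa [moveToFront_succ] using mul_mem (hmem i.succ) (inv_mem (hmem i.castSucc))
  rw [← Subgroup.toSubmonoid_inj, Subgroup.top_toSubmonoid, ← top_le_iff,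
    ← Perm.mclosure_swap_castSucc_succ n, Submonoid.closure_le]
  exact hswap

lemma TSn_apply (q : K) (x : Fin (n + 1) → K) (π σ : Perm (Fin (n + 1))) :
    TSn (n + 1) q x π σ =
      (∑ k : Fin (n + 1), prodGen (n + 1) q k π σ) * (x (σ 0) / q ^ (n - σ 0 : ℕ)) := by
  rw [TSn, Matrix.mul_apply_eq_vecMul, vecMul_XSn_apply, ← Fin.sum_univ_eq_sum_range,
    Matrix.sum_apply]

variable [LinearOrder K] [IsStrictOrderedRing K] {q : K}

lemma genMat_nonneg (hq : 1 ≤ q) (i : Fin n) (π σ : Perm (Fin (n + 1))) :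
    0 ≤ genMat (n + 1) q i π σ := by
  rw [genMat_apply]
  split_ifs <;> linarith

lemma genMat_mul_swap_pos (hq : 1 ≤ q) (i : Fin n) (π : Perm (Fin (n + 1))) :
    0 < genMat (n + 1) q i π (π * swap i.castSucc i.succ) := by
  rw [genMat_apply, if_pos (by rw [mul_assoc, swap_mul_self, mul_one])]
  split_ifs <;> linarith

lemma prodGen_nonneg (hq : 1 ≤ q) (k : Fin (n + 1)) (π σ : Perm (Fin (n + 1))) :
    0 ≤ prodGen (n + 1) q k π σ := by
  induction k using Fin.induction generalizing π with
  | zero =>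
    rw [Fin.val_zero, prodGen, Matrix.one_apply]
    split_ifs <;> simp
  | succ i ih => exact sum_nonneg fun τ _ => mul_nonneg (genMat_nonneg hq i π τ) (ih τ)

lemma prodGen_mul_moveToFront_pos (hq : 1 ≤ q) (k : Fin (n + 1)) (π : Perm (Fin (n + 1))) :
    0 < prodGen (n + 1) q k π (π * moveToFront k) := by
  induction k using Fin.induction generalizing π with
  | zero => simp [prodGen, moveToFront]
  | succ i ih =>
    rw [moveToFront_succ, ← mul_assoc]
    exact sum_pos' (fun τ _ => mul_nonneg (genMat_nonneg hq i π τ)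
        (prodGen_nonneg hq i.castSucc τ _))
      ⟨π * swap i.castSucc i.succ, mem_univ _, mul_pos (genMat_mul_swap_pos hq i π) (ih _)⟩

theorem TSn_isIrreducible {x : Fin (n + 1) → K} (hq : 1 ≤ q) (hx : ∀ a, 0 < x a) :
    (TSn (n + 1) q x).IsIrreducible := by
  have hweight : ∀ σ : Perm (Fin (n + 1)), 0 < x (σ 0) / q ^ (n - σ 0 : ℕ) := fun σ =>
    div_pos (hx _) (pow_pos (zero_lt_one.trans_le hq) _)
  refine isIrreducible_of_closure_eq_top ?_ (Set.range_nonempty moveToFront)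
    closure_range_moveToFront ?_
  · intro π σ
    rw [TSn_apply]
    exact mul_nonneg (sum_nonneg fun k _ => prodGen_nonneg hq k π σ) (hweight σ).le
  · rintro π _ ⟨k, rfl⟩
    rw [TSn_apply]
    exact mul_pos (sum_pos' (fun k _ => prodGen_nonneg hq k π _)
      ⟨k, mem_univ k, prodGen_mul_moveToFront_pos hq k π⟩) (hweight _)

end IrreducibleTSn

/-! ### The product formula -/

section KappaSet

variable {α : Type*} [LinearOrder α] [LocallyFiniteOrderBot α]

/-- The set version of the paper's `κ`, in which the exponent of the letter `b` is the number of
smaller letters outside the set. -/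
def kappaSet (q : K) (x : α → K) (B : Finset α) : K := ∑ b ∈ B, x b * q ^ #(Iio b \ B)

lemma kappaSet_insert_of_forall_lt (q : K) (x : α → K) {B : Finset α} {a : α}
    (ha : ∀ b ∈ B, b < a) :
    kappaSet q x (insert a B) = x a * q ^ #(Iio a \ B) + kappaSet q x B := by
  have hlow : ∀ b ∈ B, Iio b \ insert a B = Iio b \ B := by grind
  have haB : a ∉ B := fun h => lt_irrefl a (ha a h)
  rw [kappaSet, sum_insert haB, sdiff_insert_of_notMem (by simp),
    sum_congr rfl fun b hb => by rw [hlow b hb], kappaSet]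

variable {q : K}

lemma kappaSet_insert_sub (hq : q ≠ 0) (x : α → K) {B : Finset α} {a : α} (ha : a ∉ B) :
    kappaSet q x (insert a B) - q⁻¹ * kappaSet q x B =
      q ^ #(Iio a \ B) * pickWeight q⁻¹ x B a := by
  have hterm : ∀ b ∈ B, x b * q ^ #(Iio b \ insert a B) - q⁻¹ * (x b * q ^ #(Iio b \ B)) =
      if b < a then q ^ #(Iio a \ B) * ((1 - q⁻¹) * (x b * q⁻¹ ^ #{c ∈ Iio a \ B | b < c}))
      else 0 := by
    intro b hb
    split_ifs with hba
    · have hsplit : Iio a \ B = (Iio b \ B) ∪ {c ∈ Iio a \ B | b < c} := by grind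
      have hcard : #(Iio a \ B) = #(Iio b \ B) + #{c ∈ Iio a \ B | b < c} := by
        rw [← card_union_of_disjoint (disjoint_left.2 (by grind)), ← hsplit]
      rw [sdiff_insert_of_notMem (by simp [hba.le]), hcard, pow_add, inv_pow]
      field_simp
    · have hab : a < b := lt_of_le_of_ne (not_lt.1 hba) (ne_of_mem_of_not_mem hb ha).symm
      have hcard : #(Iio b \ B) = #(Iio b \ insert a B) + 1 := by
        rw [sdiff_insert, card_erase_add_one (by grind)]
      rw [hcard, pow_succ]
      field_simp
      ring
  have hlow : Iio a ∩ B = {b ∈ B | b < a} := by grind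
  rw [kappaSet, kappaSet, sum_insert ha, sdiff_insert_of_notMem (by simp), mul_sum,
    add_sub_assoc, ← sum_sub_distrib, sum_congr rfl hterm, ← sum_filter, ← mul_sum, ← mul_sum,
    pickWeight, passingWeight, hlow]
  ring

lemma kappaSet_insert_sub_of_forall_lt (hq : q ≠ 0) (x : α → K) {B P : Finset α} {a : α}
    (ha : a ∉ B) (hBP : ∀ c < a, c ∈ B ↔ c ∈ P) :
    kappaSet q x (insert a B) - q⁻¹ * kappaSet q x B =
      q ^ #(Iio a \ P) * pickWeight q⁻¹ x P a := by
  have hinter : Iio a ∩ B = Iio a ∩ P := by grind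
  have hsdiff : Iio a \ B = Iio a \ P := by grind
  rw [kappaSet_insert_sub hq x ha, pickWeight, passingWeight, hinter, hsdiff, pickWeight,
    passingWeight]

variable [Fintype α]

lemma kappaSet_univ (q : K) (x : α → K) : kappaSet q x univ = ∑ a, x a := by
  simp [kappaSet, sdiff_eq_empty_iff_subset.2 (subset_univ _)]

lemma kappaSet_eq_pow_mul_passingWeight (hq : q ≠ 0) (x : α → K) (P : Finset α) :
    kappaSet q x P = q ^ #Pᶜ * passingWeight q⁻¹ x P univ := by
  rw [kappaSet, passingWeight, univ_inter, mul_sum]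
  refine sum_congr rfl fun b hb => ?_
  have hsplit : Pᶜ = (Iio b \ P) ∪ {c ∈ univ \ P | b < c} := by grind [mem_compl]
  have hcard : #Pᶜ = #(Iio b \ P) + #{c ∈ univ \ P | b < c} := by
    rw [← card_union_of_disjoint (disjoint_left.2 (by grind)), ← hsplit]
  rw [hcard, pow_add, inv_pow]
  field_simp

end KappaSet

section ProductFormula

variable {n : ℕ} {q : K}

lemma sum_get_mul_zpow_eq_kappaSet (q : K) (x : Fin n → K) {s : List (Fin n)}
    (hs : s.Pairwise (· > ·)) :
    ∑ i : Fin s.length, x (s.get i) * q ^ ((i : ℤ) + ((s.get i : ℕ) + 1) - s.length) =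
      kappaSet q x s.toFinset := by
  induction s with
  | nil => simp [kappaSet]
  | cons a l ih =>
    obtain ⟨hal, hl⟩ := List.pairwise_cons.1 hs
    have hsub : l.toFinset ⊆ Iio a := fun c hc => mem_Iio.2 (hal c (List.mem_toFinset.1 hc))
    have hcard : #(Iio a \ l.toFinset) + l.length = a := by
      rw [← List.toFinset_card_of_nodup (hl.imp ne_of_gt), card_sdiff_add_card_eq_card hsub,
        Fin.card_Iio]
    have hexp : (0 : ℤ) + ((a : ℕ) + 1) - ((l.length + 1 : ℕ) : ℤ) = #(Iio a \ l.toFinset) := by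
      omega
    rw [List.toFinset_cons, kappaSet_insert_of_forall_lt q x fun b hb => mem_Iio.1 (hsub hb),
      ← ih hl]
    refine (Fin.sum_univ_succ (n := l.length) _).trans (congrArg₂ _ ?_ ?_)
    · simp only [Fin.val_zero, List.get_eq_getElem, List.getElem_cons_zero, List.length_cons]
      rw [← zpow_natCast, ← hexp, Nat.cast_zero]
    · refine sum_congr rfl fun i _ => ?_
      simp only [List.get_eq_getElem, Fin.val_succ, List.getElem_cons_succ]
      congr 2
      push_cast [List.length_cons]
      ring

lemma kappa_eq_kappaSet (q : K) (x : Fin n → K) {b : List (Fin n)} (hb : b.Nodup) :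
    kappa q x b = kappaSet q x b.toFinset := by
  have hperm : (b.insertionSort (fun a c => c ≤ a)).Perm b := List.perm_insertionSort _ _
  have hsorted : (b.insertionSort (fun a c => c ≤ a)).Pairwise (· > ·) :=
    ((List.pairwise_insertionSort _ _).and (hperm.nodup_iff.2 hb)).imp
      fun h => lt_of_le_of_ne h.1 h.2.symm
  rw [← List.toFinset_eq_of_perm _ _ hperm, ← sum_get_mul_zpow_eq_kappaSet q x hsorted, kappa]

lemma kappa_map_filter_finRange (q : K) (x : Fin n → K) (σ : Perm (Fin n)) (p : Fin n → Prop)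
    [DecidablePred p] :
    kappa q x (((List.finRange n).filter fun i => decide (p i)).map σ) =
      kappaSet q x {c | p (σ.symm c)} := by
  rw [kappa_eq_kappaSet q x (((List.nodup_finRange n).filter _).map σ.injective)]
  congr 1
  ext c
  simp [← Equiv.eq_symm_apply]

lemma kappa_prefixVals (q : K) (x : Fin n → K) (σ : Perm (Fin n)) (k : Fin n) :
    kappa q x (prefixVals σ k) = kappaSet q x (prefixSet σ k) := by
  rw [prefixVals, kappa_map_filter_finRange]
  congr 1
  ext c
  simp [mem_prefixSet]

lemma kappa_finRange (q : K) (x : Fin n → K) : kappa q x (List.finRange n) = ∑ i, x i := by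
  rw [kappa_eq_kappaSet q x (List.nodup_finRange n), List.toFinset_finRange, kappaSet_univ]

lemma kappa_finRange_sub (hq : q ≠ 0) (x : Fin n → K) (σ : Perm (Fin n)) (k : Fin n) :
    kappa q x (List.finRange n) - q ^ (((k : ℕ) : ℤ) - (n : ℤ)) * kappa q x (prefixVals σ k) =
      totalPickWeight q⁻¹ x (prefixSet σ k) := by
  have hcard : ((k : ℕ) : ℤ) - n = -(#(prefixSet σ k)ᶜ : ℤ) := by
    rw [card_compl, card_prefixSet, Fintype.card_fin]
    omega
  rw [kappa_finRange, kappa_prefixVals, kappaSet_eq_pow_mul_passingWeight hq, hcard, zpow_neg,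
    zpow_natCast, inv_mul_cancel_left₀ (pow_ne_zero _ hq), totalPickWeight_eq]

lemma kappa_singleton_of_isLRM (hq : q ≠ 0) (x : Fin n → K) {σ : Perm (Fin n)} {k : Fin n}
    (hk : isLRM σ k) :
    kappa q x [σ k] =
      q ^ #(Iio (σ k) \ prefixSet σ k) * pickWeight q⁻¹ x (prefixSet σ k) (σ k) := by
  have hnone : ∀ c < σ k, c ∈ (∅ : Finset (Fin n)) ↔ c ∈ prefixSet σ k := by
    intro c hc
    have hlt := hk (σ.symm c)
    rw [apply_symm_apply] at hlt
    simpa [mem_prefixSet] using fun h => lt_asymm hc (hlt h)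
  rw [← kappaSet_insert_sub_of_forall_lt hq x (notMem_empty _) hnone,
    kappa_eq_kappaSet q x (List.nodup_singleton _)]
  simp [kappaSet]

lemma pMin_le_of_lt {σ : Perm (Fin n)} {i k : Fin n} (hik : i < k) (hσ : σ i < σ k) :
    pMin σ k ≤ i :=
  Nat.sInf_le ⟨i.isLt, hik, hσ⟩

lemma pMin_le_of_not_isLRM {σ : Perm (Fin n)} {k : Fin n} (hk : ¬isLRM σ k) :
    pMin σ k ≤ k := by
  rw [isLRM] at hk
  push Not at hk
  obtain ⟨i, hik, hle⟩ := hk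
  exact (pMin_le_of_lt hik (hle.lt_of_ne (σ.injective.ne hik.ne))).trans hik.le

/-- All smaller letters before position `k` stand at position `pMin σ k` or later, so the segment
starting there sees the same letters below `σ k` as the whole prefix. -/
lemma kappa_segTo_sub_of_not_isLRM (hq : q ≠ 0) (x : Fin n → K) {σ : Perm (Fin n)} {k : Fin n}
    (hk : ¬isLRM σ k) :
    kappa q x (segTo σ k) - q⁻¹ * kappa q x (segBefore σ k) =
      q ^ #(Iio (σ k) \ prefixSet σ k) * pickWeight q⁻¹ x (prefixSet σ k) (σ k) := by
  let B : Finset (Fin n) := {c | pMin σ k ≤ (σ.symm c : ℕ) ∧ (σ.symm c : ℕ) < k}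
  have hprefix : ∀ c < σ k, c ∈ B ↔ c ∈ prefixSet σ k := by
    intro c hc
    have hmin := pMin_le_of_lt (σ := σ) (i := σ.symm c) (k := k)
    rw [apply_symm_apply] at hmin
    simpa [B, mem_prefixSet] using fun h => hmin h hc
  have hsegTo : ({c | pMin σ k ≤ (σ.symm c : ℕ) ∧ (σ.symm c : ℕ) ≤ k} : Finset (Fin n)) =
      insert (σ k) B := by
    have hp := pMin_le_of_not_isLRM hk
    ext c
    have heq : c = σ k ↔ (σ.symm c : ℕ) = k := by rw [← Fin.ext_iff, symm_apply_eq]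
    simp only [B, mem_filter, mem_univ, true_and, mem_insert, heq]
    omega
  rw [← kappaSet_insert_sub_of_forall_lt hq x (by simp [B]) hprefix, ← hsegTo, segTo, segBefore,
    kappa_map_filter_finRange, kappa_map_filter_finRange]

lemma invCount_eq_sum (σ : Perm (Fin n)) :
    invCount σ = ∑ k, #(Iio (σ k) \ prefixSet σ k) := by
  simp only [invCount, card_filter, Fintype.sum_prod_type]
  refine sum_congr rfl fun k _ => ?_
  have hmap : Iio (σ k) \ prefixSet σ k =
      ({j | k < j ∧ σ j < σ k} : Finset (Fin n)).map σ.toEmbedding := by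
    ext c
    have heq : c = σ k ↔ σ.symm c = k := (symm_apply_eq _).symm
    simp only [mem_sdiff, mem_Iio, mem_prefixSet, mem_map_equiv, mem_filter, mem_univ, true_and,
      apply_symm_apply]
    grind
  rw [hmap, card_map, card_filter]

lemma prod_filter_isLRM_mul_prod_filter_not (hq : q ≠ 0) (x : Fin n → K) (σ : Perm (Fin n)) :
    (∏ k with k.val + 1 < n ∧ isLRM σ k, kappa q x [σ k]) *
        (∏ k with k.val + 1 < n ∧ ¬isLRM σ k,
          (kappa q x (segTo σ k) - q⁻¹ * kappa q x (segBefore σ k))) =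
      ∏ k with k.val + 1 < n,
        q ^ #(Iio (σ k) \ prefixSet σ k) * pickWeight q⁻¹ x (prefixSet σ k) (σ k) := by
  conv_rhs => rw [← prod_filter_mul_prod_filter_not _ (isLRM σ), filter_filter, filter_filter]
  congr 1
  · exact prod_congr rfl fun k hk => kappa_singleton_of_isLRM hq x (mem_filter.1 hk).2.2
  · exact prod_congr rfl fun k hk => kappa_segTo_sub_of_not_isLRM hq x (mem_filter.1 hk).2.2

lemma psiFormula_eq_orderProb (hq : q ≠ 0) {x : Fin (n + 1) → K}
    (hD : ∀ P ≠ univ, totalPickWeight q⁻¹ x P ≠ 0) (σ : Perm (Fin (n + 1))) :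
    psiFormula (n + 1) q x σ = orderProb q⁻¹ x σ := by
  have hfilter : ({k | k.val + 1 < n + 1} : Finset (Fin (n + 1))) = univ.erase (Fin.last n) := by
    ext k
    simp [Fin.ext_iff]
    omega
  have hinv : invCount σ = ∑ k ∈ univ.erase (Fin.last n), #(Iio (σ k) \ prefixSet σ k) := by
    have hlast : Iio (σ (Fin.last n)) \ prefixSet σ (Fin.last n) = ∅ := by
      rw [sdiff_eq_inter_compl, compl_prefixSet_last]
      simp
    rw [invCount_eq_sum, ← add_sum_erase _ _ (mem_univ (Fin.last n)), hlast, card_empty, zero_add]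
  rw [psiFormula, prod_filter_isLRM_mul_prod_filter_not hq, hfilter, prod_mul_distrib,
    prod_pow_eq_pow_sum, ← hinv, zpow_neg, zpow_natCast,
    inv_mul_cancel_left₀ (pow_ne_zero _ hq), prod_congr rfl fun k _ => kappa_finRange_sub hq x σ k,
    ← prod_div_distrib, orderProb, ← mul_prod_erase _ _ (mem_univ (Fin.last n)),
    pickProb_prefixSet_last (hD _ (prefixSet_ne_univ _ _)), one_mul]
  rfl

end ProductFormula

/-! ### The stationary distribution -/

lemma isStationary_orderProb {n : ℕ} {q : ℝ} (hq : 1 ≤ q) {x : Fin (n + 1) → ℝ}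
    (hx : ∀ i, 0 < x i) :
    IsStationary (TSn (n + 1) q x) (∑ i, x i) (orderProb q⁻¹ x) := by
  have hq0 : 0 < q := one_pos.trans_le hq
  have hD := totalPickWeight_inv_ne_zero hq hx
  have hnonneg : ∀ σ, 0 ≤ orderProb q⁻¹ x σ := fun σ => prod_nonneg fun k _ =>
    have ht0 : 0 ≤ q⁻¹ := inv_nonneg.2 hq0.le
    have ht1 : q⁻¹ ≤ 1 := inv_le_one_of_one_le₀ hq
    div_nonneg (pickWeight_pos ht0 ht1 hx _ _).le
      (totalPickWeight_pos ht0 ht1 hx (prefixSet_ne_univ σ k)).le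
  exact ⟨hnonneg, sum_orderProb hD, orderProb_vecMul_TSn hq0.ne' hD⟩

theorem qTsetlin_perm_stationary_general (n : ℕ) (hn : 1 ≤ n) (q : ℝ) (hq : 1 ≤ q)
    (x : Fin n → ℝ) (hx : ∀ i, 0 < x i) :
    (∃! Ψ : Perm (Fin n) → ℝ, IsStationary (TSn n q x) (∑ i, x i) Ψ) ∧
    (∀ Ψ : Perm (Fin n) → ℝ, IsStationary (TSn n q x) (∑ i, x i) Ψ →
      ∀ π : Perm (Fin n), Ψ π = psiFormula n q x π) := by
  obtain ⟨m, rfl⟩ := Nat.exists_eq_add_of_le' hn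
  have hq0 : q ≠ 0 := (one_pos.trans_le hq).ne'
  have hstat := isStationary_orderProb hq hx
  have huniq : ∀ Ψ, IsStationary (TSn (m + 1) q x) (∑ i, x i) Ψ → Ψ = orderProb q⁻¹ x :=
    fun Ψ hΨ => hΨ.eq_of_isIrreducible (TSn_isIrreducible hq hx) hstat
  refine ⟨⟨_, hstat, huniq⟩, fun Ψ hΨ π => ?_⟩
  rw [huniq Ψ hΨ, psiFormula_eq_orderProb hq0 (totalPickWeight_inv_ne_zero hq hx)]

/-- For `n ≥ 1`, real `q ≥ 1` and positive weights `x` summing to `1`,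
the q-Tsetlin library operator `T_{S_n}(q,x)` has a unique stationary distribution, and any
stationary distribution is given componentwise by the product formula `psiFormula`. -/
theorem qTsetlin_perm_stationary (n : ℕ) (hn : 1 ≤ n) (q : ℝ) (hq : 1 ≤ q)
    (x : Fin n → ℝ) (hx : ∀ i, 0 < x i) (hx1 : ∑ i, x i = 1) :
    (∃! Ψ : Equiv.Perm (Fin n) → ℝ, IsStationary (TSn n q x) (∑ i, x i) Ψ) ∧
    (∀ Ψ : Equiv.Perm (Fin n) → ℝ, IsStationary (TSn n q x) (∑ i, x i) Ψ →
      ∀ π : Equiv.Perm (Fin n), Ψ π = psiFormula n q x π) :=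
  qTsetlin_perm_stationary_general n hn q hq x hx

end QTsetlin
end
end

section
/- Let q be a prime power, σ ∈ S_n, 1 ≤ i ≤ n−1, and let hB ∈ [σ]. Then in ℂ[G/B]: (i) if σ_{i+1} < σ_i, then (hB)·T_i = ∑_{j=1}^q g_jB for q pairwise distinct cosets g_jB ∈ [σs_i], and summing over the double coset, (∑_{hB∈[σ]} hB)·T_i = ∑_{gB∈[σs_i]} gB; (ii) if σ_{i+1} > σ_i, then (hB)·T_i = gB + ∑_{j=1}^{q−1} h_jB for some gB ∈ [σs_i] and q−1 pairwise distinct cosets h_jB ∈ [σ], and summing over the double coset, (∑_{hB∈[σ]} hB)·T_i = q·(∑_{gB∈[σs_i]} gB) + (q−1)·(∑_{hB∈[σ]} hB). -/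
open scoped Classical
set_option synthInstance.maxHeartbeats 1000000
set_option maxHeartbeats 1000000

noncomputable section

namespace QTsetlin

/-- `M` is upper triangular. -/
def upperTri {F : Type} [Field F] {n : ℕ} (M : Matrix (Fin n) (Fin n) F) : Prop :=
  ∀ i j : Fin n, j < i → M i j = 0

/-- `M` is lower triangular. -/
def lowerTri {F : Type} [Field F] {n : ℕ} (M : Matrix (Fin n) (Fin n) F) : Prop :=
  ∀ i j : Fin n, i < j → M i j = 0

variable (F : Type) [Field F] [Fintype F] [DecidableEq F] (n : ℕ)

/-- The general linear group `G = GL_n(F_q)`. -/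
abbrev GLn := GL (Fin n) F

/-- The Borel subgroup `B` of invertible upper triangular matrices. -/
def Bsub : Subgroup (GLn F n) where
  carrier := {g | upperTri (g : Matrix (Fin n) (Fin n) F)}
  one_mem' := by
    intro i j hij
    simp [Matrix.one_apply, (Fin.ne_of_lt hij).symm]
  mul_mem' := by
    intro a b ha hb i j hij
    exact Matrix.BlockTriangular.mul ha hb hij
  inv_mem' := by
    intro a ha
    have hdet : IsUnit ((a : Matrix (Fin n) (Fin n) F).det) :=
      (Matrix.isUnit_iff_isUnit_det _).mp a.isUnit
    have hinv : Invertible (a : Matrix (Fin n) (Fin n) F) :=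
      Matrix.invertibleOfIsUnitDet _ hdet
    have h2 : ((a : Matrix (Fin n) (Fin n) F)⁻¹).BlockTriangular (id : Fin n → Fin n) :=
      Matrix.blockTriangular_inv_of_blockTriangular ha
    show upperTri ((a⁻¹ : GLn F n) : Matrix (Fin n) (Fin n) F)
    rw [show ((a⁻¹ : GLn F n) : Matrix (Fin n) (Fin n) F)
        = (a : Matrix (Fin n) (Fin n) F)⁻¹ from Matrix.coe_units_inv a]
    exact h2

/-- The set of cosets `G/B`. -/
abbrev Cosets := GLn F n ⧸ Bsub F n

/-- permutation matrix of `π`: entry 1 in positions `(π j, j)`. -/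
def permMat (π : Equiv.Perm (Fin n)) : Matrix (Fin n) (Fin n) F :=
  fun i j => if π j = i then 1 else 0

lemma permMat_mul (π σ : Equiv.Perm (Fin n)) :
    permMat F n π * permMat F n σ = permMat F n (π * σ) := by
  ext i j
  rw [Matrix.mul_apply]
  simp only [permMat, mul_ite, ite_mul, one_mul, mul_one, mul_zero, zero_mul]
  rw [Finset.sum_eq_single (σ j)]
  · by_cases h : π (σ j) = i <;> simp [Equiv.Perm.mul_apply, h]
  · intro k _ hk
    simp [hk.symm]
  · simp

lemma permMat_one : permMat F n 1 = 1 := by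
  ext i j
  simp [permMat, Matrix.one_apply, eq_comm]

/-- The permutation matrix of `π`, as an element of `GL_n(F)`. -/
def permGL (π : Equiv.Perm (Fin n)) : GLn F n :=
  ⟨permMat F n π, permMat F n π⁻¹,
    by rw [permMat_mul, mul_inv_cancel, permMat_one],
    by rw [permMat_mul, inv_mul_cancel, permMat_one]⟩

/-- `f_i(t)`: identity matrix with an extra entry `t` in position `(r, c)`, as an
element of `GL_n(F)`. -/
def transvGL (r c : Fin n) (h : r ≠ c) (t : F) : GLn F n :=
  ⟨Matrix.transvection r c t, Matrix.transvection r c (-t),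
    by rw [Matrix.transvection_mul_transvection_same _ _ h, add_neg_cancel,
      Matrix.transvection_zero],
    by rw [Matrix.transvection_mul_transvection_same _ _ h, neg_add_cancel,
      Matrix.transvection_zero]⟩

variable (K : Type) [Field K]

/-- Matrix (row convention: row `gB` is `(gB) · T_{k+1}`) of the Hecke generator `T_{k+1}`
(paper indexing) on `ℂ[G/B]`:
`(gB)·T_i = g s_i B + ∑_{t ≠ 0} g f_i(t) B`, where `s_i` swaps (0-based) positions `k, k+1`
and `f_i(t)` has an extra entry `t` in (0-based) position `(k+1, k)`. -/
def genGB (k : ℕ) : Matrix (Cosets F n) (Cosets F n) K := fun C D =>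
  if h : k + 1 < n then
    (if (QuotientGroup.mk (C.out * permGL F n
          (Equiv.swap ⟨k, Nat.lt_of_succ_lt h⟩ ⟨k + 1, h⟩)) : Cosets F n) = D then 1 else 0)
    + ((Finset.univ.filter fun t : F => t ≠ 0 ∧
        (QuotientGroup.mk (C.out * transvGL F n ⟨k + 1, h⟩ ⟨k, Nat.lt_of_succ_lt h⟩
          (fun hc => by simp [Fin.ext_iff] at hc) t) : Cosets F n) = D).card : K)
  else 0

/-- Matrix of the product `T_k T_{k-1} ⋯ T_1` (paper indexing) on `ℂ[G/B]`. -/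
def prodGenGB : ℕ → Matrix (Cosets F n) (Cosets F n) K
  | 0 => 1
  | k + 1 => genGB F n K k * prodGenGB k

/-- The (0-based) row index of the leading entry (the pivot `1` of the distinguished coset
representative) in the first column of a representative of the coset `C`. -/
def pivotRow (C : Cosets F n) : ℕ :=
  sInf {i : ℕ | ∃ h : i < n,
    ((C.out : GLn F n) : Matrix (Fin n) (Fin n) F) ⟨i, h⟩
      ⟨0, Nat.lt_of_le_of_lt (Nat.zero_le i) h⟩ ≠ 0}

/-- Matrix of the weighting operator `X_{G/B}(q,x)`, where `q` is the cardinality of the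
field: `gB ↦ (x_i / q^{n-i}) gB` with `i` the row index of the leading 1 in the first
column of the distinguished representative of `gB`. -/
def XGB (x : Fin n → K) : Matrix (Cosets F n) (Cosets F n) K := fun C D =>
  if D = C then
    (if h : pivotRow F n C < n then
      x ⟨pivotRow F n C, h⟩ / (Fintype.card F : K) ^ (n - 1 - pivotRow F n C)
    else 0)
  else 0

/-- Matrix of the q-Tsetlin library operator
`T_{G/B}(q,x) = (∑_{i=1}^n T_{i-1} ⋯ T_1) ∘ X_{G/B}(q,x)` on `ℂ[G/B]` (row convention). -/
def TGB (x : Fin n → K) : Matrix (Cosets F n) (Cosets F n) K :=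
  (∑ k ∈ Finset.range n, prodGenGB F n K k) * XGB F n K x

/-- The coset `gB` belongs to the double coset `[π] = B⁻ π B`. -/
def inDC (π : Equiv.Perm (Fin n)) (C : Cosets F n) : Prop :=
  ∃ l b : GLn F n, lowerTri (l : Matrix (Fin n) (Fin n) F) ∧
    upperTri (b : Matrix (Fin n) (Fin n) F) ∧
    C = QuotientGroup.mk (l * permGL F n π * b)

/-!
For adjacent positions `i ⋖ j` let `P ≥ B` be the minimal parabolic subgroup of `s = (i j)`.
The fibre of `G/B → G/P` through `gB` is a projective line, with points `g s B` and `g f(t) B` for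
`t ∈ F`, and `gB` is the point `t = 0`: hence `T_i` sends a coset to the sum of the other points
of its fibre.

Let `τ i < τ j`. A fibre meeting `[τ]` or `[τ s]` passes through a point `l τ B` with `l` lower
triangular. Since `τ f(t) τ⁻¹` is lower triangular, its points with `t ∈ F` all lie in `[τ]`, while
the point at infinity `l τ s B` lies in `[τ s]`. So every such fibre consists of `q` points of `[τ]`
and one point of `[τ s]`, and the rows and column sums of `T_i` are obtained by counting.
-/

section BlockTriangular

variable {m R α : Type*} [Fintype m] [DecidableEq m] [CommRing R] [LinearOrder α]

variable (R) in
/-- The group of invertible block-triangular matrices, where `b` assigns its block to each index: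
`b = id` gives the upper triangular group, `b = toDual` the lower triangular one, and a monotone
`b` a standard parabolic subgroup. -/
def blockTriangularSubgroup (b : m → α) : Subgroup (GL m R) where
  carrier := {g | (g : Matrix m m R).BlockTriangular b}
  one_mem' := Matrix.blockTriangular_one
  mul_mem' := Matrix.BlockTriangular.mul
  inv_mem' {g} hg := by
    have : Invertible (g : Matrix m m R) := g.invertible
    rw [Set.mem_ofPred_eq, Matrix.coe_units_inv]
    exact Matrix.blockTriangular_inv_of_blockTriangular hg

lemma blockTriangularSubgroup_le_comp {β : Type*} [LinearOrder β] (b : m → α) {f : α → β}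
    (hf : Monotone f) : blockTriangularSubgroup R b ≤ blockTriangularSubgroup R (f ∘ b) :=
  fun _ hg _ _ hlt => hg (hf.reflect_lt hlt)

lemma diag_ne_zero_of_mem_lower [LinearOrder m] [Nontrivial R] {g : GL m R}
    (hg : g ∈ blockTriangularSubgroup R (OrderDual.toDual : m → mᵒᵈ)) (r : m) :
    (g : Matrix m m R) r r ≠ 0 := by
  have hdet : IsUnit (∏ r, (g : Matrix m m R) r r) := by
    rw [← Matrix.det_of_isLowerTriangular _ hg]
    exact (Matrix.isUnit_iff_isUnit_det _).mp g.isUnit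
  exact (isUnit_of_dvd_unit (Finset.dvd_prod_of_mem _ (Finset.mem_univ r)) hdet).ne_zero

end BlockTriangular

lemma perm_eq_one_of_forall_apply_le {N : ℕ} {π : Equiv.Perm (Fin N)} (h : ∀ r, π r ≤ r) :
    π = 1 := by
  have hsum : ∑ r, (π r).val = ∑ r : Fin N, r.val := Equiv.sum_comp π Fin.val
  have heq := (Finset.sum_eq_sum_iff_of_le fun r _ => Fin.le_def.mp (h r)).mp hsum
  exact Equiv.ext fun r => Fin.ext (heq r (Finset.mem_univ r))

variable {F n}

section Permutation

lemma coe_permGL (π : Equiv.Perm (Fin n)) :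
    (permGL F n π : Matrix (Fin n) (Fin n) F) = π⁻¹.permMatrix F := by
  ext r c
  simp only [permGL, permMat, PEquiv.toMatrix_apply, Equiv.toPEquiv_apply, Option.mem_some_iff,
    eq_comm (b := r), Equiv.Perm.inv_eq_iff_eq]

lemma permGL_mul_apply (π : Equiv.Perm (Fin n)) (g : GLn F n) (r c : Fin n) :
    (permGL F n π * g : GLn F n) r c = g (π⁻¹ r) c := by
  rw [Units.val_mul, coe_permGL, PEquiv.toMatrix_toPEquiv_mul, Matrix.submatrix_apply, id]

lemma mul_permGL_apply (π : Equiv.Perm (Fin n)) (g : GLn F n) (r c : Fin n) :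
    (g * permGL F n π : GLn F n) r c = g r (π c) := by
  rw [Units.val_mul, coe_permGL, PEquiv.mul_toMatrix_toPEquiv, Matrix.submatrix_apply, id,
    ← Equiv.Perm.inv_def, inv_inv]

lemma permGL_mul (π τ : Equiv.Perm (Fin n)) :
    permGL F n (π * τ) = permGL F n π * permGL F n τ :=
  Units.ext (permMat_mul F n π τ).symm

lemma permGL_inv (π : Equiv.Perm (Fin n)) : (permGL F n π)⁻¹ = permGL F n π⁻¹ := rfl

lemma permGL_mem_blockTriangularSubgroup {α : Type*} [LinearOrder α] {b : Fin n → α}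
    {π : Equiv.Perm (Fin n)} (h : ∀ r, b (π r) = b r) :
    permGL F n π ∈ blockTriangularSubgroup F b := by
  intro r c hlt
  refine if_neg fun hπ => hlt.ne ?_
  rw [← hπ, h]

end Permutation

section Transvection

lemma permGL_mul_transvGL (τ : Equiv.Perm (Fin n)) {r c : Fin n} (h : r ≠ c) (t : F) :
    permGL F n τ * transvGL F n r c h t =
      transvGL F n (τ r) (τ c) (τ.injective.ne h) t * permGL F n τ := by
  ext a b
  rw [permGL_mul_apply, mul_permGL_apply]
  obtain ⟨a, rfl⟩ := τ.surjective a
  simp [transvGL, Matrix.transvection, Matrix.one_apply, Matrix.single_apply]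

omit [Fintype F] [DecidableEq F]

lemma transvGL_zero {r c : Fin n} (h : r ≠ c) : transvGL F n r c h 0 = 1 :=
  Units.ext (Matrix.transvection_zero r c)

lemma transvGL_inv {r c : Fin n} (h : r ≠ c) (t : F) :
    (transvGL F n r c h t)⁻¹ = transvGL F n r c h (-t) := Units.ext rfl

lemma transvGL_mul_apply_same {r c : Fin n} (h : r ≠ c) (t : F) (g : GLn F n) (d : Fin n) :
    (transvGL F n r c h t * g : GLn F n) r d = g r d + t * g c d :=
  Matrix.transvection_mul_apply_same r c d t (g : Matrix (Fin n) (Fin n) F)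

lemma transvGL_mem_blockTriangularSubgroup {α : Type*} [LinearOrder α] {b : Fin n → α}
    {r c : Fin n} (h : r ≠ c) (hb : b r ≤ b c) (t : F) :
    transvGL F n r c h t ∈ blockTriangularSubgroup F b :=
  Matrix.blockTriangular_transvection hb t

end Transvection

section MinimalParabolic

variable {i j : Fin n}

variable (F) in
/-- For adjacent `i ⋖ j`, the minimal parabolic subgroup `B ∪ B s B` of the transposition
`s = (i j)`, encoded by putting `j` into the block of `i`. -/
def minParabolic (i j : Fin n) : Subgroup (GLn F n) :=
  blockTriangularSubgroup F (Function.update id j i)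

lemma update_id_apply_swap (i j r : Fin n) :
    Function.update id j i (Equiv.swap i j r) = Function.update id j i r := by
  rcases eq_or_ne r i with rfl | hri
  · simp [Function.update_apply]
  rcases eq_or_ne r j with rfl | hrj
  · simp [Function.update_apply]
  · rw [Equiv.swap_apply_of_ne_of_ne hri hrj]

lemma monotone_update_id (hij : i ⋖ j) : Monotone (Function.update id j i) := by
  intro r c hrc
  rcases eq_or_ne r j with hr | hr <;> rcases eq_or_ne c j with hc | hc
  · rw [hr, hc]
  · simpa [hr, hc] using hij.le.trans (hr ▸ hrc)
  · simpa [hr, hc] using hij.le_of_lt (lt_of_le_of_ne (hc ▸ hrc) hr)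
  · simpa [hr, hc] using hrc

omit [Fintype F] [DecidableEq F] in
lemma Bsub_le_minParabolic (hij : i ⋖ j) : Bsub F n ≤ minParabolic F i j :=
  blockTriangularSubgroup_le_comp id (monotone_update_id hij)

omit [Fintype F] [DecidableEq F] in
lemma mem_Bsub_iff_of_mem_minParabolic (hij : i ⋖ j) {p : GLn F n} (hp : p ∈ minParabolic F i j) :
    p ∈ Bsub F n ↔ p j i = 0 := by
  refine ⟨fun hB => hB j i hij.lt, fun h0 r c hcr => ?_⟩
  rcases eq_or_ne r j with rfl | hr
  · rcases (hij.le_of_lt hcr).eq_or_lt with rfl | hci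
    · exact h0
    · exact hp (by simpa [hcr.ne] using hci)
  rcases eq_or_ne c j with rfl | hc
  · exact hp (by simpa [hr] using hij.lt.trans hcr)
  · exact hp (by simpa [hr, hc] using hcr)

/-- Representatives of the points of `P/B`, for `P` the minimal parabolic subgroup of `(i j)`.
This quotient is the projective line over `F`, encoded as `Option F` with `none` the point at
infinity; `some 0` is the base point. -/
def pointRep (hij : i ⋖ j) : Option F → GLn F n
  | none => permGL F n (Equiv.swap i j)
  | some t => transvGL F n j i hij.lt.ne' t

lemma pointRep_mem_minParabolic (hij : i ⋖ j) (o : Option F) :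
    pointRep hij o ∈ minParabolic F i j := by
  cases o with
  | none => exact permGL_mem_blockTriangularSubgroup (update_id_apply_swap i j)
  | some t => exact transvGL_mem_blockTriangularSubgroup hij.lt.ne' (by simp [hij.lt.ne]) t

lemma pointRep_none_inv_mul_mem_Bsub_iff (hij : i ⋖ j) {p : GLn F n}
    (hp : p ∈ minParabolic F i j) : (pointRep hij none)⁻¹ * p ∈ Bsub F n ↔ p i i = 0 := by
  rw [mem_Bsub_iff_of_mem_minParabolic hij
    (mul_mem (inv_mem (pointRep_mem_minParabolic hij none)) hp),
    pointRep, permGL_inv, permGL_mul_apply, inv_inv, Equiv.swap_apply_right]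

lemma pointRep_some_inv_mul_mem_Bsub_iff (hij : i ⋖ j) {p : GLn F n}
    (hp : p ∈ minParabolic F i j) (t : F) :
    (pointRep hij (some t))⁻¹ * p ∈ Bsub F n ↔ p j i = t * p i i := by
  rw [mem_Bsub_iff_of_mem_minParabolic hij
    (mul_mem (inv_mem (pointRep_mem_minParabolic hij (some t))) hp),
    pointRep, transvGL_inv, transvGL_mul_apply_same, neg_mul, add_neg_eq_zero]

lemma exists_pointRep_inv_mul_mem_Bsub (hij : i ⋖ j) {p : GLn F n}
    (hp : p ∈ minParabolic F i j) : ∃ o, (pointRep hij o)⁻¹ * p ∈ Bsub F n := by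
  by_cases hii : p i i = 0
  · exact ⟨none, (pointRep_none_inv_mul_mem_Bsub_iff hij hp).mpr hii⟩
  · exact ⟨some (p j i / p i i),
      (pointRep_some_inv_mul_mem_Bsub_iff hij hp _).mpr (div_mul_cancel₀ _ hii).symm⟩

lemma pointRep_inv_mul_pointRep_mem_Bsub_iff (hij : i ⋖ j) (o o' : Option F) :
    (pointRep hij o)⁻¹ * pointRep hij o' ∈ Bsub F n ↔ o = o' := by
  have hmem := pointRep_mem_minParabolic hij o'
  cases o with
  | none =>
    rw [pointRep_none_inv_mul_mem_Bsub_iff hij hmem]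
    cases o' <;>
      simp [pointRep, permGL, permMat, transvGL, Matrix.transvection, hij.lt.ne']
  | some t =>
    rw [pointRep_some_inv_mul_mem_Bsub_iff hij hmem]
    cases o' <;>
      simp [pointRep, permGL, permMat, transvGL, Matrix.transvection, hij.lt.ne', eq_comm]

end MinimalParabolic

section Fibre

variable {i j : Fin n}

/-- The projection `G/B → G/P` to the cosets of the minimal parabolic subgroup of `(i j)`. -/
def proj (hij : i ⋖ j) : Cosets F n → GLn F n ⧸ minParabolic F i j :=
  Subgroup.quotientMapOfLE (Bsub_le_minParabolic hij)

/-- The fibre through `C` of the projection `G/B → G/P`, a projective line over `F`. -/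
def fibre (hij : i ⋖ j) (C : Cosets F n) : Finset (Cosets F n) :=
  Finset.univ.filter fun D => proj hij D = proj hij C

/-- The points of the fibre of `G/B → G/P` through `gB`, parametrised by the projective line. -/
def fibrePoint (hij : i ⋖ j) (g : GLn F n) (o : Option F) : Cosets F n :=
  QuotientGroup.mk (g * pointRep hij o)

lemma mem_fibre {hij : i ⋖ j} {C D : Cosets F n} :
    D ∈ fibre hij C ↔ proj hij D = proj hij C := by
  simp only [fibre, Finset.mem_filter, Finset.mem_univ, true_and]

lemma mem_fibre_comm {hij : i ⋖ j} {C D : Cosets F n} : D ∈ fibre hij C ↔ C ∈ fibre hij D := by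
  rw [mem_fibre, mem_fibre, eq_comm]

lemma self_mem_fibre (hij : i ⋖ j) (C : Cosets F n) : C ∈ fibre hij C := mem_fibre.mpr rfl

lemma fibre_eq_of_mem {hij : i ⋖ j} {C D : Cosets F n} (h : D ∈ fibre hij C) :
    fibre hij D = fibre hij C := by
  rw [fibre, fibre, mem_fibre.mp h]

lemma fibrePoint_injective (hij : i ⋖ j) (g : GLn F n) :
    Function.Injective (fibrePoint hij g) := by
  intro o o' h
  rwa [fibrePoint, fibrePoint, QuotientGroup.eq, mul_inv_rev, mul_assoc, inv_mul_cancel_left,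
    pointRep_inv_mul_pointRep_mem_Bsub_iff] at h

lemma fibrePoint_some_zero (hij : i ⋖ j) (g : GLn F n) :
    fibrePoint hij g (some 0) = QuotientGroup.mk g := by
  rw [fibrePoint, pointRep, transvGL_zero, mul_one]

lemma fibre_mk (hij : i ⋖ j) (g : GLn F n) :
    fibre hij (QuotientGroup.mk g) = Finset.univ.image (fibrePoint hij g) := by
  ext D
  induction D using QuotientGroup.induction_on with
  | H d =>
    simp only [mem_fibre, proj, Subgroup.quotientMapOfLE_apply_mk, Finset.mem_image,
      Finset.mem_univ, true_and, fibrePoint, eq_comm (a := (d : GLn F n ⧸ minParabolic F i j)),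
      QuotientGroup.eq, mul_inv_rev, mul_assoc]
    refine ⟨exists_pointRep_inv_mul_mem_Bsub hij, fun ⟨o, ho⟩ => ?_⟩
    simpa using mul_mem (pointRep_mem_minParabolic hij o) (Bsub_le_minParabolic hij ho)

end Fibre

section SchubertCell

variable (F n) in
/-- The opposite Borel subgroup `B⁻` of invertible lower triangular matrices. -/
abbrev lowerBorel : Subgroup (GLn F n) :=
  blockTriangularSubgroup F (OrderDual.toDual : Fin n → (Fin n)ᵒᵈ)

lemma inDC_iff {π : Equiv.Perm (Fin n)} {C : Cosets F n} :
    inDC F n π C ↔ ∃ l ∈ lowerBorel F n,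
      QuotientGroup.mk (l * permGL F n π) = C := by
  constructor
  · rintro ⟨l, b, hl, hb, rfl⟩
    exact ⟨l, hl, (QuotientGroup.mk_mul_of_mem (s := Bsub F n) _ hb).symm⟩
  · rintro ⟨l, hl, rfl⟩
    exact ⟨l, 1, hl, (Bsub F n).one_mem, by rw [mul_one]⟩

/-- The opposite Schubert cell `[π] = B⁻πB` in `G/B`, as a finite set. -/
def schubertCell (F : Type) [Field F] [Fintype F] [DecidableEq F] (π : Equiv.Perm (Fin n)) :
    Finset (Cosets F n) :=
  Finset.univ.filter (inDC F n π)

lemma mem_schubertCell {π : Equiv.Perm (Fin n)} {C : Cosets F n} :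
    C ∈ schubertCell F π ↔ inDC F n π C := by
  simp only [schubertCell, Finset.mem_filter, Finset.mem_univ, true_and]

lemma eq_of_mem_schubertCell {σ τ : Equiv.Perm (Fin n)} {C : Cosets F n}
    (hσ : C ∈ schubertCell F σ) (hτ : C ∈ schubertCell F τ) : σ = τ := by
  obtain ⟨l, hl, rfl⟩ := inDC_iff.mp (mem_schubertCell.mp hσ)
  obtain ⟨m, hm, hC⟩ := inDC_iff.mp (mem_schubertCell.mp hτ)
  have hB : permGL F n σ⁻¹ * (l⁻¹ * m * permGL F n τ) ∈ Bsub F n := by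
    rwa [eq_comm, QuotientGroup.eq, mul_inv_rev, permGL_inv, mul_assoc, ← mul_assoc l⁻¹] at hC
  refine inv_mul_eq_one.mp (perm_eq_one_of_forall_apply_le fun c => not_lt.mp fun hc => ?_)
  have hdiag := hB _ c hc
  rw [permGL_mul_apply, mul_permGL_apply, inv_inv, Equiv.Perm.mul_apply,
    Equiv.Perm.inv_def, Equiv.apply_symm_apply] at hdiag
  exact diag_ne_zero_of_mem_lower (mul_mem (inv_mem hl) hm) _ hdiag

lemma disjoint_schubertCell {σ τ : Equiv.Perm (Fin n)} (h : σ ≠ τ) :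
    Disjoint (schubertCell F σ) (schubertCell F τ) :=
  Finset.disjoint_left.mpr fun _ hσ hτ => h (eq_of_mem_schubertCell hσ hτ)

variable {i j : Fin n} {l : GLn F n}

lemma fibrePoint_none_mem_schubertCell (hij : i ⋖ j) (τ : Equiv.Perm (Fin n))
    (hl : l ∈ lowerBorel F n) :
    fibrePoint hij (l * permGL F n τ) none ∈ schubertCell F (τ * Equiv.swap i j) :=
  mem_schubertCell.mpr (inDC_iff.mpr ⟨l, hl, by rw [permGL_mul, fibrePoint, pointRep, mul_assoc]⟩)

lemma fibrePoint_some_mem_schubertCell (hij : i ⋖ j) {τ : Equiv.Perm (Fin n)} (hτ : τ i < τ j)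
    (hl : l ∈ lowerBorel F n) (t : F) :
    fibrePoint hij (l * permGL F n τ) (some t) ∈ schubertCell F τ := by
  refine mem_schubertCell.mpr (inDC_iff.mpr ⟨l * transvGL F n (τ j) (τ i) hτ.ne' t,
    mul_mem hl (transvGL_mem_blockTriangularSubgroup hτ.ne'
      (OrderDual.toDual_le_toDual.mpr hτ.le) t), ?_⟩)
  rw [fibrePoint, pointRep, mul_assoc, mul_assoc, permGL_mul_transvGL]

lemma exists_fibre_eq_image (hij : i ⋖ j) {τ : Equiv.Perm (Fin n)} {C : Cosets F n}
    (hC : C ∈ schubertCell F τ ∪ schubertCell F (τ * Equiv.swap i j)) :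
    ∃ l ∈ lowerBorel F n,
      fibre hij C = Finset.univ.image (fibrePoint hij (l * permGL F n τ)) := by
  simp only [Finset.mem_union, mem_schubertCell, inDC_iff] at hC
  rcases hC with ⟨l, hl, rfl⟩ | ⟨l, hl, rfl⟩
  · exact ⟨l, hl, fibre_mk hij _⟩
  · refine ⟨l, hl, ?_⟩
    have hmem : fibrePoint hij (l * permGL F n τ) none ∈
        fibre hij (l * permGL F n τ : GLn F n) := by
      rw [fibre_mk]
      exact Finset.mem_image_of_mem _ (Finset.mem_univ none)
    rw [← fibre_mk, ← fibre_eq_of_mem hmem, fibrePoint, pointRep, permGL_mul, mul_assoc]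

end SchubertCell

section FibreOfCell

variable {i j : Fin n} {τ : Equiv.Perm (Fin n)} {C D : Cosets F n}

lemma ne_mul_swap (hij : i ⋖ j) (τ : Equiv.Perm (Fin n)) : τ ≠ τ * Equiv.swap i j := fun h =>
  hij.ne (Equiv.swap_eq_one_iff.mp (mul_eq_left.mp h.symm))

lemma fibre_subset_schubertCell_union (hij : i ⋖ j) (hτ : τ i < τ j)
    (hC : C ∈ schubertCell F τ ∪ schubertCell F (τ * Equiv.swap i j)) :
    fibre hij C ⊆ schubertCell F τ ∪ schubertCell F (τ * Equiv.swap i j) := by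
  obtain ⟨l, hl, hfib⟩ := exists_fibre_eq_image hij hC
  rw [hfib, Finset.image_subset_iff]
  rintro (_ | t) -
  · exact Finset.mem_union_right _ (fibrePoint_none_mem_schubertCell hij τ hl)
  · exact Finset.mem_union_left _ (fibrePoint_some_mem_schubertCell hij hτ hl t)

lemma card_fibre_inter_schubertCell (hij : i ⋖ j) (hτ : τ i < τ j)
    (hC : C ∈ schubertCell F τ ∪ schubertCell F (τ * Equiv.swap i j)) :
    (fibre hij C ∩ schubertCell F τ).card = Fintype.card F ∧
      (fibre hij C ∩ schubertCell F (τ * Equiv.swap i j)).card = 1 := by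
  obtain ⟨l, hl, hfib⟩ := exists_fibre_eq_image hij hC
  have hnone := fibrePoint_none_mem_schubertCell hij τ hl
  have hsome := fibrePoint_some_mem_schubertCell hij hτ hl
  have hdisj := Finset.disjoint_left.mp (disjoint_schubertCell (F := F) (ne_mul_swap hij τ))
  constructor
  · rw [← Finset.card_univ, ← Finset.card_image_of_injective _
      ((fibrePoint_injective hij (l * permGL F n τ)).comp (Option.some_injective F)), hfib]
    congr 1
    ext D
    simp only [Finset.mem_inter, Finset.mem_image, Finset.mem_univ, true_and, Function.comp]
    constructor
    · rintro ⟨⟨_ | t, rfl⟩, hD⟩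
      · exact absurd hnone (hdisj hD)
      · exact ⟨t, rfl⟩
    · rintro ⟨t, rfl⟩
      exact ⟨⟨some t, rfl⟩, hsome t⟩
  · refine Finset.card_eq_one.mpr ⟨fibrePoint hij (l * permGL F n τ) none, ?_⟩
    ext D
    simp only [hfib, Finset.mem_inter, Finset.mem_image, Finset.mem_univ, true_and,
      Finset.mem_singleton]
    constructor
    · rintro ⟨⟨_ | t, rfl⟩, hD⟩
      · rfl
      · exact absurd hD (hdisj (hsome t))
    · rintro rfl
      exact ⟨⟨none, rfl⟩, hnone⟩

end FibreOfCell

section Hecke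

variable {K} {k : ℕ}

lemma mk_covBy_mk_succ (hk : k + 1 < n) :
    (⟨k, Nat.lt_of_succ_lt hk⟩ : Fin n) ⋖ ⟨k + 1, hk⟩ :=
  Fin.covBy_iff.mpr (Order.covBy_add_one k)

lemma genGB_eq_sum (hk : k + 1 < n) (C D : Cosets F n) :
    genGB F n K k C D = ∑ o ∈ Finset.univ.erase (some 0),
      if fibrePoint (mk_covBy_mk_succ hk) C.out o = D then 1 else 0 := by
  have hpoints : (Finset.univ.erase (some 0) : Finset (Option F)) =
      insert none ((Finset.univ.erase 0).image some) := by
    ext (_ | t) <;> simp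
  rw [hpoints, Finset.sum_insert (by simp), Finset.sum_image (Option.some_injective F).injOn,
    Finset.sum_boole, genGB, dif_pos hk, ← Finset.filter_ne', Finset.filter_filter]
  rfl

lemma genGB_apply (hk : k + 1 < n) (C D : Cosets F n) :
    genGB F n K k C D = if D ∈ (fibre (mk_covBy_mk_succ hk) C).erase C then 1 else 0 := by
  have hC : (QuotientGroup.mk C.out : Cosets F n) = C := QuotientGroup.out_eq' C
  have hinj := fibrePoint_injective (mk_covBy_mk_succ hk) C.out
  have himage : (fibre (mk_covBy_mk_succ hk) C).erase C =
      (Finset.univ.erase (some 0)).image (fibrePoint (mk_covBy_mk_succ hk) C.out) := by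
    rw [Finset.image_erase hinj, fibrePoint_some_zero, ← fibre_mk, hC]
  rw [genGB_eq_sum hk, himage, ← Finset.sum_image (f := fun E => if E = D then (1 : K) else 0)
    hinj.injOn, Finset.sum_ite_eq']

lemma sum_genGB (hk : k + 1 < n) (A : Finset (Cosets F n)) (D : Cosets F n) :
    ∑ C ∈ A, genGB F n K k C D = (((fibre (mk_covBy_mk_succ hk) D ∩ A).erase D).card : K) := by
  simp only [genGB_apply hk]
  rw [Finset.sum_boole]
  congr 2
  ext C
  simp only [Finset.mem_filter, Finset.mem_erase, Finset.mem_inter, ne_comm (a := D),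
    mem_fibre_comm (D := D)]
  tauto

end Hecke

section Counting

variable {i j : Fin n} {τ : Equiv.Perm (Fin n)} {C : Cosets F n}

lemma erase_fibre_eq_of_mem_descent (hij : i ⋖ j) (hτ : τ i < τ j)
    (hC : C ∈ schubertCell F (τ * Equiv.swap i j)) :
    (fibre hij C).erase C = fibre hij C ∩ schubertCell F τ := by
  have hC' := Finset.mem_union_right (schubertCell F τ) hC
  have hsub := fibre_subset_schubertCell_union hij hτ hC'
  have hone := (card_fibre_inter_schubertCell hij hτ hC').2
  have hdisj := Finset.disjoint_left.mp (disjoint_schubertCell (F := F) (ne_mul_swap hij τ))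
  ext D
  rw [Finset.mem_erase, Finset.mem_inter, and_comm]
  refine and_congr_right fun hD => ⟨fun hne => ?_, ?_⟩
  · refine (Finset.mem_union.mp (hsub hD)).resolve_right fun hDs => hne ?_
    exact Finset.card_le_one.mp hone.le D (Finset.mem_inter.mpr ⟨hD, hDs⟩) C
      (Finset.mem_inter.mpr ⟨self_mem_fibre hij C, hC⟩)
  · rintro hDτ rfl
    exact hdisj hDτ hC

lemma exists_erase_fibre_eq_insert_of_mem_ascent (hij : i ⋖ j) (hτ : τ i < τ j)
    (hC : C ∈ schubertCell F τ) :
    ∃ D₀ ∈ schubertCell F (τ * Equiv.swap i j),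
      (fibre hij C).erase C = insert D₀ ((fibre hij C ∩ schubertCell F τ).erase C) := by
  have hC' := Finset.mem_union_left (schubertCell F (τ * Equiv.swap i j)) hC
  obtain ⟨D₀, hD₀⟩ := Finset.card_eq_one.mp (card_fibre_inter_schubertCell hij hτ hC').2
  have hmem : D₀ ∈ schubertCell F (τ * Equiv.swap i j) :=
    (Finset.mem_inter.mp (hD₀ ▸ Finset.mem_singleton_self D₀)).2
  have hne : D₀ ≠ C := fun h =>
    Finset.disjoint_left.mp (disjoint_schubertCell (ne_mul_swap hij τ)) hC (h ▸ hmem)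
  refine ⟨D₀, hmem, ?_⟩
  rw [← Finset.erase_insert_of_ne hne, Finset.insert_eq, ← hD₀, ← Finset.inter_union_distrib_left,
    Finset.union_comm,
    Finset.inter_eq_left.mpr (fibre_subset_schubertCell_union hij hτ hC')]

lemma fibre_inter_schubertCell_eq_empty (hij : i ⋖ j) (hτ : τ i < τ j) {π : Equiv.Perm (Fin n)}
    (hπ : schubertCell F π ⊆ schubertCell F τ ∪ schubertCell F (τ * Equiv.swap i j))
    (hC : C ∉ schubertCell F τ ∪ schubertCell F (τ * Equiv.swap i j)) :
    fibre hij C ∩ schubertCell F π = ∅ := by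
  refine Finset.disjoint_iff_inter_eq_empty.mp (Finset.disjoint_left.mpr fun D hD hDπ => hC ?_)
  exact fibre_subset_schubertCell_union hij hτ (hπ hDπ) (mem_fibre_comm.mp hD)

lemma card_erase_fibre_inter_descent (hij : i ⋖ j) (hτ : τ i < τ j) (D : Cosets F n) :
    ((fibre hij D ∩ schubertCell F (τ * Equiv.swap i j)).erase D).card =
      if D ∈ schubertCell F τ then 1 else 0 := by
  have hdisj := Finset.disjoint_left.mp (disjoint_schubertCell (F := F) (ne_mul_swap hij τ))
  split_ifs with hD
  · rw [Finset.erase_eq_of_notMem fun h => hdisj hD (Finset.mem_inter.mp h).2]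
    exact (card_fibre_inter_schubertCell hij hτ (Finset.mem_union_left _ hD)).2
  by_cases hDs : D ∈ schubertCell F (τ * Equiv.swap i j)
  · rw [Finset.card_erase_of_mem (Finset.mem_inter.mpr ⟨self_mem_fibre hij D, hDs⟩),
      (card_fibre_inter_schubertCell hij hτ (Finset.mem_union_right _ hDs)).2]
  · rw [fibre_inter_schubertCell_eq_empty hij hτ Finset.subset_union_right (by simp [hD, hDs]),
      Finset.erase_empty, Finset.card_empty]

lemma card_erase_fibre_inter_ascent (hij : i ⋖ j) (hτ : τ i < τ j) (D : Cosets F n) :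
    ((fibre hij D ∩ schubertCell F τ).erase D).card =
      Fintype.card F * (if D ∈ schubertCell F (τ * Equiv.swap i j) then 1 else 0) +
        (Fintype.card F - 1) * (if D ∈ schubertCell F τ then 1 else 0) := by
  have hdisj := Finset.disjoint_left.mp (disjoint_schubertCell (F := F) (ne_mul_swap hij τ))
  by_cases hD : D ∈ schubertCell F τ
  · rw [Finset.card_erase_of_mem (Finset.mem_inter.mpr ⟨self_mem_fibre hij D, hD⟩),
      (card_fibre_inter_schubertCell hij hτ (Finset.mem_union_left _ hD)).1]
    simp [hD, hdisj hD]
  rw [Finset.erase_eq_of_notMem fun h => hD (Finset.mem_inter.mp h).2]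
  by_cases hDs : D ∈ schubertCell F (τ * Equiv.swap i j)
  · rw [(card_fibre_inter_schubertCell hij hτ (Finset.mem_union_right _ hDs)).1]
    simp [hD, hDs]
  · rw [fibre_inter_schubertCell_eq_empty hij hτ Finset.subset_union_left (by simp [hD, hDs])]
    simp [hD, hDs]

end Counting

section HeckeOnCells

variable {K} {k : ℕ} {τ : Equiv.Perm (Fin n)} {C : Cosets F n}

lemma genGB_apply_of_mem_descent (hk : k + 1 < n)
    (hτ : τ ⟨k, Nat.lt_of_succ_lt hk⟩ < τ ⟨k + 1, hk⟩)
    (hC : C ∈ schubertCell F (τ * Equiv.swap ⟨k, Nat.lt_of_succ_lt hk⟩ ⟨k + 1, hk⟩))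
    (D : Cosets F n) :
    genGB F n K k C D =
      if D ∈ fibre (mk_covBy_mk_succ hk) C ∩ schubertCell F τ then 1 else 0 := by
  rw [genGB_apply hk, erase_fibre_eq_of_mem_descent _ hτ hC]

lemma exists_genGB_apply_of_mem_ascent (hk : k + 1 < n)
    (hτ : τ ⟨k, Nat.lt_of_succ_lt hk⟩ < τ ⟨k + 1, hk⟩) (hC : C ∈ schubertCell F τ) :
    ∃ D₀ ∈ schubertCell F (τ * Equiv.swap ⟨k, Nat.lt_of_succ_lt hk⟩ ⟨k + 1, hk⟩),
      ∀ D, genGB F n K k C D = (if D = D₀ then 1 else 0) +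
        if D ∈ (fibre (mk_covBy_mk_succ hk) C ∩ schubertCell F τ).erase C then 1 else 0 := by
  have hij := mk_covBy_mk_succ hk
  obtain ⟨D₀, hD₀, herase⟩ := exists_erase_fibre_eq_insert_of_mem_ascent hij hτ hC
  have hnotMem : D₀ ∉ (fibre hij C ∩ schubertCell F τ).erase C := fun h =>
    Finset.disjoint_left.mp (disjoint_schubertCell (ne_mul_swap hij τ))
      (Finset.mem_inter.mp (Finset.mem_of_mem_erase h)).2 hD₀
  refine ⟨D₀, hD₀, fun D => ?_⟩
  simp only [genGB_apply hk, herase, Finset.mem_insert]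
  rcases eq_or_ne D D₀ with rfl | hne
  · simp only [hnotMem, or_false, if_true, if_false, add_zero]
  · simp only [hne, false_or, if_false, zero_add]

lemma sum_genGB_descent (hk : k + 1 < n)
    (hτ : τ ⟨k, Nat.lt_of_succ_lt hk⟩ < τ ⟨k + 1, hk⟩) (D : Cosets F n) :
    ∑ C ∈ schubertCell F (τ * Equiv.swap ⟨k, Nat.lt_of_succ_lt hk⟩ ⟨k + 1, hk⟩),
      genGB F n K k C D = if D ∈ schubertCell F τ then 1 else 0 := by
  rw [sum_genGB hk, card_erase_fibre_inter_descent _ hτ, Nat.cast_ite, Nat.cast_one, Nat.cast_zero]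

lemma sum_genGB_ascent (hk : k + 1 < n)
    (hτ : τ ⟨k, Nat.lt_of_succ_lt hk⟩ < τ ⟨k + 1, hk⟩) (D : Cosets F n) :
    ∑ C ∈ schubertCell F τ, genGB F n K k C D =
      (Fintype.card F : K) *
          (if D ∈ schubertCell F (τ * Equiv.swap ⟨k, Nat.lt_of_succ_lt hk⟩ ⟨k + 1, hk⟩)
           then 1 else 0) +
        ((Fintype.card F : K) - 1) * (if D ∈ schubertCell F τ then 1 else 0) := by
  rw [sum_genGB hk, card_erase_fibre_inter_ascent _ hτ]
  push_cast [Nat.cast_pred (R := K) (Fintype.card_pos (α := F))]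
  rfl

end HeckeOnCells

theorem hecke_generator_on_double_cosets_general (F : Type) [Field F] [Fintype F] [DecidableEq F]
    (K : Type) [Field K]
    (n k : ℕ) (hk : k + 1 < n) (σ : Equiv.Perm (Fin n)) :
    (σ ⟨k + 1, hk⟩ < σ ⟨k, Nat.lt_of_succ_lt hk⟩ →
      (∀ C : Cosets F n, inDC F n σ C →
        ∃ S : Finset (Cosets F n), S.card = Fintype.card F ∧
          (∀ D ∈ S, inDC F n (σ * Equiv.swap ⟨k, Nat.lt_of_succ_lt hk⟩ ⟨k + 1, hk⟩) D) ∧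
          (∀ D : Cosets F n, genGB F n K k C D = if D ∈ S then 1 else 0)) ∧
      (∀ D : Cosets F n,
        ∑ C ∈ Finset.univ.filter (fun C : Cosets F n => inDC F n σ C), genGB F n K k C D =
          if inDC F n (σ * Equiv.swap ⟨k, Nat.lt_of_succ_lt hk⟩ ⟨k + 1, hk⟩) D
          then 1 else 0)) ∧
    (σ ⟨k, Nat.lt_of_succ_lt hk⟩ < σ ⟨k + 1, hk⟩ →
      (∀ C : Cosets F n, inDC F n σ C →
        ∃ D₀ : Cosets F n,
          inDC F n (σ * Equiv.swap ⟨k, Nat.lt_of_succ_lt hk⟩ ⟨k + 1, hk⟩) D₀ ∧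
          ∃ S : Finset (Cosets F n), S.card = Fintype.card F - 1 ∧
            (∀ D ∈ S, inDC F n σ D) ∧
            (∀ D : Cosets F n, genGB F n K k C D =
              (if D = D₀ then 1 else 0) + (if D ∈ S then 1 else 0))) ∧
      (∀ D : Cosets F n,
        ∑ C ∈ Finset.univ.filter (fun C : Cosets F n => inDC F n σ C), genGB F n K k C D =
          (Fintype.card F : K) *
            (if inDC F n (σ * Equiv.swap ⟨k, Nat.lt_of_succ_lt hk⟩ ⟨k + 1, hk⟩) D
             then 1 else 0)
          + ((Fintype.card F : K) - 1) * (if inDC F n σ D then 1 else 0))) := by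
  have hij := mk_covBy_mk_succ hk
  simp only [← mem_schubertCell]
  refine ⟨fun hσ => ?_, fun hσ => ⟨fun C hC => ?_, fun D => ?_⟩⟩
  · obtain ⟨τ, rfl⟩ : ∃ τ, σ = τ * Equiv.swap ⟨k, Nat.lt_of_succ_lt hk⟩ ⟨k + 1, hk⟩ :=
      ⟨_, (Equiv.mul_swap_mul_self _ _ σ).symm⟩
    rw [Equiv.mul_swap_mul_self]
    have hτ : τ ⟨k, Nat.lt_of_succ_lt hk⟩ < τ ⟨k + 1, hk⟩ := by simpa using hσ
    refine ⟨fun C hC => ⟨fibre hij C ∩ schubertCell F τ,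
      (card_fibre_inter_schubertCell hij hτ (Finset.mem_union_right _ hC)).1,
      fun D hD => (Finset.mem_inter.mp hD).2, genGB_apply_of_mem_descent hk hτ hC⟩, fun D => ?_⟩
    simpa using sum_genGB_descent (K := K) hk hτ D
  · obtain ⟨D₀, hD₀, hrow⟩ := exists_genGB_apply_of_mem_ascent (K := K) hk hσ hC
    refine ⟨D₀, hD₀, (fibre hij C ∩ schubertCell F σ).erase C, ?_,
      fun D hD => (Finset.mem_inter.mp (Finset.mem_of_mem_erase hD)).2, hrow⟩
    rw [Finset.card_erase_of_mem (Finset.mem_inter.mpr ⟨self_mem_fibre hij C, hC⟩),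
      (card_fibre_inter_schubertCell hij hσ (Finset.mem_union_left _ hC)).1]
  · simpa using sum_genGB_ascent (K := K) hk hσ D

/-- Action of a Hecke generator on a double coset in `ℂ[G/B]`.  Here `q`
is a prime power (the cardinality of the finite field `F`), the paper's generator index
`i ∈ {1,…,n-1}` corresponds to the 0-based index `k = i - 1` (so `T_i` is `genGB F n ℂ k`,
swapping 0-based positions `k` and `k+1`), `σ s_i` is `σ * Equiv.swap ⟨k,_⟩ ⟨k+1,_⟩`, and
`(hB)·T_i` is the row of the matrix `genGB F n ℂ k` at the coset `hB`. -/
theorem hecke_generator_on_double_cosets (F : Type) [Field F] [Fintype F] [DecidableEq F]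
    (n k : ℕ) (hk : k + 1 < n) (σ : Equiv.Perm (Fin n)) :
    -- (i): the case `σ_{i+1} < σ_i`
    (σ ⟨k + 1, hk⟩ < σ ⟨k, Nat.lt_of_succ_lt hk⟩ →
      (∀ C : Cosets F n, inDC F n σ C →
        ∃ S : Finset (Cosets F n), S.card = Fintype.card F ∧
          (∀ D ∈ S, inDC F n (σ * Equiv.swap ⟨k, Nat.lt_of_succ_lt hk⟩ ⟨k + 1, hk⟩) D) ∧
          (∀ D : Cosets F n, genGB F n ℂ k C D = if D ∈ S then 1 else 0)) ∧
      (∀ D : Cosets F n,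
        ∑ C ∈ Finset.univ.filter (fun C : Cosets F n => inDC F n σ C), genGB F n ℂ k C D =
          if inDC F n (σ * Equiv.swap ⟨k, Nat.lt_of_succ_lt hk⟩ ⟨k + 1, hk⟩) D
          then 1 else 0)) ∧
    -- (ii): the case `σ_{i+1} > σ_i`
    (σ ⟨k, Nat.lt_of_succ_lt hk⟩ < σ ⟨k + 1, hk⟩ →
      (∀ C : Cosets F n, inDC F n σ C →
        ∃ D₀ : Cosets F n,
          inDC F n (σ * Equiv.swap ⟨k, Nat.lt_of_succ_lt hk⟩ ⟨k + 1, hk⟩) D₀ ∧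
          ∃ S : Finset (Cosets F n), S.card = Fintype.card F - 1 ∧
            (∀ D ∈ S, inDC F n σ D) ∧
            (∀ D : Cosets F n, genGB F n ℂ k C D =
              (if D = D₀ then 1 else 0) + (if D ∈ S then 1 else 0))) ∧
      (∀ D : Cosets F n,
        ∑ C ∈ Finset.univ.filter (fun C : Cosets F n => inDC F n σ C), genGB F n ℂ k C D =
          (Fintype.card F : ℂ) *
            (if inDC F n (σ * Equiv.swap ⟨k, Nat.lt_of_succ_lt hk⟩ ⟨k + 1, hk⟩) D
             then 1 else 0)
          + ((Fintype.card F : ℂ) - 1) * (if inDC F n σ D then 1 else 0))) :=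
  hecke_generator_on_double_cosets_general F ℂ n k hk σ

end QTsetlin
end
end
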